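/- arXiv:2307.01912 — 8 statements merged into one kernel-verified Lean document; each statement's English description precedes it below -/
import Mathlib

section
/- Let n, m be natural numbers and let x be an integer with x + m ≥ 0. Assume that x + 2i - j ≠ 0 for all integers i, j with 1 ≤ i ≤ n and 1 ≤ j ≤ m. Then the determinant of the n×n rational matrix T_{n,m}(x) whose (i,j)-entry (for 0 ≤ i, j ≤ n-1) is C(x+m, j-i+m) − C(x+m, m-i-j-1) equals ∏_{i=1}^{n} ∏_{j=1}^{m} ((x+i-j)(x+2i+j-2)) / ((x+2i-j)(i+j-1)). -/
/-- `C N k` : the binomial coefficient `C(N,k)` for `N : ℕ` and `k : ℤ`,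
with the convention that it is `0` when `k < 0` or `k > N`, as a rational. -/
def C (N : ℕ) (k : ℤ) : ℚ := if 0 ≤ k then (N.choose k.toNat : ℚ) else 0

lemma C_nat (N k : ℕ) : C N (k : ℤ) = N.choose k := by
  simp [C]

lemma C_neg (N : ℕ) (k : ℤ) (h : k < 0) : C N k = 0 := by
  simp [C, not_le.mpr h]

lemma C_gt (N : ℕ) (k : ℤ) (h : (N : ℤ) < k) : C N k = 0 := by
  unfold C
  split_ifs
  · rw [Nat.choose_eq_zero_of_lt (by omega)]; simp
  · rfl

lemma C_succ (N : ℕ) (t : ℤ) : C (N + 1) t = C N t + C N (t - 1) := by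
  rcases lt_trichotomy t 0 with h | h | h
  · rw [C_neg _ _ h, C_neg _ _ h, C_neg _ _ (by omega)]; simp
  · subst h
    rw [C_neg N (0 - 1) (by omega)]
    simp [C]
  · obtain ⟨k, rfl⟩ : ∃ k : ℕ, t = ((k + 1 : ℕ) : ℤ) := ⟨(t - 1).toNat, by omega⟩
    have e : ((k + 1 : ℕ) : ℤ) - 1 = (k : ℕ) := by push_cast; ring
    rw [e, C_nat, C_nat, C_nat, Nat.choose_succ_succ]
    push_cast; ring

lemma C_add_two (N : ℕ) (t : ℤ) :
    C (N + 2) t = C N t + 2 * C N (t - 1) + C N (t - 2) := by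
  have e : t - 1 - 1 = t - 2 := by ring
  rw [show N + 2 = (N + 1) + 1 from rfl, C_succ, C_succ, C_succ, e]
  ring

/-- the updated coefficients -/
def stepc (c : ℕ → ℚ) : ℕ → ℚ
  | 0 => c 0 + c 1
  | k + 1 => c k + 2 * c (k + 1) + c (k + 2)

lemma sum_step (c : ℕ → ℚ) (g : ℤ → ℚ) (hg : g (-1) = - g 0) (n : ℕ) :
    ∑ k ∈ Finset.range (n + 1), c k * (g (k + 1) + 2 * g k + g (k - 1)) =
    ∑ k ∈ Finset.range (n + 1), stepc c k * g k + c n * g (n + 1) - c (n + 1) * g n := by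
  induction n with
  | zero => simp [stepc, hg]; ring
  | succ n ih =>
    rw [Finset.sum_range_succ, ih, Finset.sum_range_succ _ (n + 1)]
    simp only [stepc]
    push_cast
    rw [show (n : ℤ) + 1 - 1 = n by ring]
    ring

lemma colop (j : ℕ) : ∃ c : ℕ → ℚ, c j = 1 ∧ (∀ k, j < k → c k = 0) ∧
    ∀ (N : ℕ) (s : ℤ) (n : ℕ), j < n →
      ∑ k ∈ Finset.range n, c k * (C N (s + k) - C N (s - k - 1)) =
      C (N + 2 * j) (s + j) - C (N + 2 * j) (s + j - 1) := by
  induction j with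
  | zero =>
    refine ⟨fun k => if k = 0 then 1 else 0, by simp, fun k hk => by simp; omega, ?_⟩
    intro N s n hn
    rw [Finset.sum_eq_single 0]
    · simp
    · intro b _ hb; simp [hb]
    · intro h; simp at h; omega
  | succ j ih =>
    obtain ⟨c, h1, h0, hs⟩ := ih
    refine ⟨stepc c, ?_, ?_, ?_⟩
    · simp [stepc, h1, h0 (j + 1) (by omega), h0 (j + 2) (by omega)]
    · intro k hk
      obtain ⟨k, rfl⟩ : ∃ k', k = k' + 1 := ⟨k - 1, by omega⟩
      simp [stepc, h0 k (by omega), h0 (k + 1) (by omega), h0 (k + 2) (by omega)]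
    · intro N s n hn
      obtain ⟨n, rfl⟩ : ∃ k', n = k' + 1 := ⟨n - 1, by omega⟩
      have key := sum_step c (fun k : ℤ => C N (s + k) - C N (s - k - 1)) (by simp [sub_eq_add_neg]) n
      rw [h0 n (by omega), h0 (n + 1) (by omega)] at key
      have h2 := hs (N + 2) (s + 1) (n + 1) (by omega)
      have e1 : N + 2 + 2 * j = N + 2 * (j + 1) := by ring
      have e2 : s + 1 + (j : ℤ) = s + ((j + 1 : ℕ) : ℤ) := by push_cast; ring
      rw [e1, e2] at h2
      rw [← h2]
      simp only [zero_mul, add_zero, sub_zero] at key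
      rw [← key]
      refine Finset.sum_congr rfl fun k _ => ?_
      rw [C_add_two, C_add_two]
      congr 1
      ring_nf

lemma newton (b : ℕ → ℚ) (a : ℕ → ℚ) (r : ℕ) : ∃ c : ℕ → ℚ,
    c 0 = ∏ l ∈ Finset.range r, (a l - b 0) ∧ (∀ k, r < k → c k = 0) ∧
    ∀ Y : ℚ, ∏ l ∈ Finset.range r, (Y + a l) =
      ∑ k ∈ Finset.range (r + 1), c k * ∏ l ∈ Finset.range k, (Y + b l) := by
  induction r with
  | zero =>
    refine ⟨fun k => if k = 0 then 1 else 0, by simp, fun k hk => by simp; omega, ?_⟩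
    intro Y; simp
  | succ r ih =>
    obtain ⟨c, h1, h0, hs⟩ := ih
    refine ⟨fun k => (a r - b k) * c k + (if k = 0 then 0 else c (k - 1)), ?_, ?_, ?_⟩
    · simp [Finset.prod_range_succ, h1, mul_comm]
    · intro k hk
      have : k ≠ 0 := by omega
      simp [this, h0 k (by omega), h0 (k - 1) (by omega)]
    · intro Y
      have e0 : ∑ k ∈ Finset.range (r + 1 + 1), (a r - b k) * c k *
          ∏ l ∈ Finset.range k, (Y + b l) = ∑ k ∈ Finset.range (r + 1), (a r - b k) * c k *
          ∏ l ∈ Finset.range k, (Y + b l) := by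
        rw [Finset.sum_range_succ, h0 (r + 1) (by omega)]; simp
      have e1 : ∑ k ∈ Finset.range (r + 1 + 1), (if k = 0 then 0 else c (k - 1)) *
          ∏ l ∈ Finset.range k, (Y + b l) = ∑ k ∈ Finset.range (r + 1), c k *
          ∏ l ∈ Finset.range (k + 1), (Y + b l) := by
        rw [Finset.sum_range_succ']; simp
      rw [Finset.prod_range_succ, hs, Finset.sum_mul]
      simp only [add_mul, Finset.sum_add_distrib]
      rw [e0, e1, ← Finset.sum_add_distrib]
      refine Finset.sum_congr rfl fun k _ => ?_
      rw [Finset.prod_range_succ]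
      ring

lemma S_entry (X m n i j : ℕ) (hi : i < n) :
    C (X + m + 2 * j) ((m : ℤ) - i + j) - C (X + m + 2 * j) ((m : ℤ) - i + j - 1) =
    ((X : ℚ) - m + 2 * i + 1) *
    (((X + m + 2 * j).factorial : ℚ) / ((m + j).factorial * (X + j + n).factorial) *
    ((∏ l ∈ Finset.range i, ((j : ℚ) + (m - l))) *
      ∏ l ∈ Finset.range (n - 1 - i), ((j : ℚ) + (X + i + 2 + l)))) := by
  have hA : ((X + j + i + 1).factorial : ℚ) *
      ∏ l ∈ Finset.range (n - 1 - i), ((j : ℚ) + (X + i + 2 + l)) = (X + j + n).factorial := by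
    have e : X + j + n = (X + j + i + 1) + (n - 1 - i) := by omega
    rw [e, ← Nat.factorial_mul_ascFactorial (X + j + i + 1), Nat.ascFactorial_eq_prod_range]
    push_cast
    congr 1
    refine Finset.prod_congr rfl fun l _ => ?_
    ring
  by_cases hk : m + j < i
  · rw [C_neg _ _ (by omega), C_neg _ _ (by omega),
      Finset.prod_eq_zero (i := m + j) (by simpa using hk) (by push_cast; ring)]
    simp
  · obtain ⟨q, hq⟩ : ∃ q, m + j = q + i := ⟨m + j - i, by omega⟩
    have hm : (m : ℚ) = q + i - j := by
      have : (m : ℚ) + j = q + i := by exact_mod_cast hq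
      linarith
    have hB : (q.factorial : ℚ) * ∏ l ∈ Finset.range i, ((j : ℚ) + (m - l)) =
        (m + j).factorial := by
      rw [hq, show q.factorial = (q + i - i).factorial by simp,
        ← Nat.factorial_mul_descFactorial (show i ≤ q + i by omega),
        Nat.descFactorial_eq_prod_range]
      push_cast
      congr 1
      refine Finset.prod_congr rfl fun l hl => ?_
      rw [Nat.cast_sub (by have := Finset.mem_range.mp hl; omega), hm]
      push_cast; ring
    have hN : X + m + 2 * j = q + (X + j + i) := by omega
    have hd : C (X + m + 2 * j) ((m : ℤ) - i + j) - C (X + m + 2 * j) ((m : ℤ) - i + j - 1) =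
        ((X : ℚ) - m + 2 * i + 1) * (X + m + 2 * j).factorial /
          (q.factorial * (X + j + i + 1).factorial) := by
      rw [show (m : ℤ) - i + j = q by omega, hN, C_nat, hm, Nat.cast_add_choose]
      rcases q with _ | q
      · rw [C_neg _ _ (by simp)]
        simp [Nat.factorial_succ]
        have := Nat.factorial_ne_zero (X + j + i)
        field_simp
        ring
      · rw [show ((q + 1 : ℕ) : ℤ) - 1 = q by push_cast; ring, C_nat,
          show q + 1 + (X + j + i) = q + (X + j + i + 1) by ring, Nat.cast_add_choose]
        simp only [Nat.factorial_succ]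
        have := Nat.factorial_ne_zero (X + j + i)
        have := Nat.factorial_ne_zero q
        push_cast
        field_simp
        ring
    rw [hd, ← hA, ← hB]
    have h1 : (∏ l ∈ Finset.range i, ((j : ℚ) + (m - l))) ≠ 0 := by
      intro h; rw [h, mul_zero] at hB
      exact Nat.factorial_ne_zero _ (by exact_mod_cast hB.symm)
    have h2 : (∏ l ∈ Finset.range (n - 1 - i), ((j : ℚ) + (X + i + 2 + l))) ≠ 0 := by
      intro h; rw [h, mul_zero] at hA
      exact Nat.factorial_ne_zero _ (by exact_mod_cast hA.symm)
    have := Nat.factorial_ne_zero (X + j + i + 1)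
    have := Nat.factorial_ne_zero q
    field_simp

lemma det_Q (b : ℕ → ℚ) (n : ℕ) :
    Matrix.det (Matrix.of fun k j : Fin n => ∏ l ∈ Finset.range (k : ℕ), (((j : ℕ) : ℚ) + b l)) =
    ∏ i ∈ Finset.range n, (i.factorial : ℚ) := by
  have h := Matrix.det_eval_matrixOfPolynomials_eq_det_vandermonde
    (fun j : Fin n => ((j : ℕ) : ℚ))
    (fun k : Fin n => ∏ l ∈ Finset.range (k : ℕ), (Polynomial.X + Polynomial.C (b l)))
    (fun k => by
      rw [Polynomial.natDegree_prod_of_monic _ _ (fun l _ => Polynomial.monic_X_add_C _)]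
      simp)
    (fun k => Polynomial.monic_prod_of_monic _ _ (fun l _ => Polynomial.monic_X_add_C _))
  rw [← Matrix.det_transpose]
  have e : (Matrix.of fun k j : Fin n =>
      ∏ l ∈ Finset.range (k : ℕ), (((j : ℕ) : ℚ) + b l)).transpose =
      Matrix.of (fun i j : Fin n => Polynomial.eval (((i : ℕ) : ℚ))
        (∏ l ∈ Finset.range (j : ℕ), (Polynomial.X + Polynomial.C (b l)))) := by
    ext i j
    simp [Polynomial.eval_prod]
  rw [e, ← h]
  rcases n with _ | n
  · simp
  · rw [Matrix.det_vandermonde_id_eq_superFactorial, ← Nat.prod_range_succ_factorial]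
    push_cast; rfl

lemma det_P (b : ℕ → ℚ) (a : ℕ → ℕ → ℚ) (n : ℕ) :
    Matrix.det (Matrix.of fun i j : Fin n =>
      (∏ l ∈ Finset.range (i : ℕ), (((j : ℕ) : ℚ) + b l)) *
      ∏ l ∈ Finset.range (n - 1 - i), (((j : ℕ) : ℚ) + a i l)) =
    (∏ i ∈ Finset.range n, ∏ l ∈ Finset.range (n - 1 - i), (a i l - b i)) *
    ∏ i ∈ Finset.range n, (i.factorial : ℚ) := by
  choose c h1 h0 hs using fun i : ℕ => newton (fun l => b (i + l)) (a i) (n - 1 - i)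
  have e : (Matrix.of fun i j : Fin n =>
      (∏ l ∈ Finset.range (i : ℕ), (((j : ℕ) : ℚ) + b l)) *
      ∏ l ∈ Finset.range (n - 1 - i), (((j : ℕ) : ℚ) + a i l)) =
      (Matrix.of fun i k : Fin n => if (i : ℕ) ≤ k then c i (k - i) else 0) *
      (Matrix.of fun k j : Fin n => ∏ l ∈ Finset.range (k : ℕ), (((j : ℕ) : ℚ) + b l)) := by
    ext i j
    simp only [Matrix.mul_apply, Matrix.of_apply]
    rw [Fin.sum_univ_eq_sum_range (fun k => (if (i : ℕ) ≤ k then c i (k - i) else 0) *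
      ∏ l ∈ Finset.range k, (((j : ℕ) : ℚ) + b l)) n]
    have hn : n = i + (n - 1 - i + 1) := by have := i.2; omega
    rw [show Finset.range n = Finset.range (i + (n - 1 - i + 1)) from congrArg _ hn,
      Finset.sum_range_add, Finset.sum_eq_zero, zero_add, hs, Finset.mul_sum]
    · refine Finset.sum_congr rfl fun k _ => ?_
      rw [Finset.prod_range_add]
      simp
      ring
    · intro k hk
      rw [if_neg (by simpa using hk), zero_mul]
  rw [e, Matrix.det_mul, det_Q, Matrix.det_of_isUpperTriangular]
  · congr 1
    rw [← Fin.prod_univ_eq_prod_range]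
    refine Finset.prod_congr rfl fun i _ => ?_
    simp [h1]
  · intro i j hij
    have : ¬ (i : ℕ) ≤ j := by simpa using hij
    simp only [Matrix.of_apply, if_neg this]

lemma det_formula (X m n : ℕ) :
    Matrix.det (Matrix.of fun i j : Fin n =>
      C (X + m) ((j : ℤ) - (i : ℤ) + m) - C (X + m) ((m : ℤ) - (i : ℤ) - (j : ℤ) - 1)) =
    ∏ i ∈ Finset.range n, (((X : ℚ) - m + 2 * i + 1) *
      (((X + m + 2 * i).factorial : ℚ) / ((m + i).factorial * (X + i + n).factorial)) *
      (∏ l ∈ Finset.range (n - 1 - i), ((X : ℚ) - m + 2 * i + 2 + l)) * i.factorial) := by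
  choose c h1 h0 hs using colop
  have hU : Matrix.det (Matrix.of fun k j : Fin n => c j k) = 1 := by
    rw [Matrix.det_of_isUpperTriangular]
    · simp [h1]
    · intro i j hij
      exact h0 _ _ (by simpa using hij)
  rw [← mul_one (Matrix.det (Matrix.of fun i j : Fin n =>
      C (X + m) ((j : ℤ) - (i : ℤ) + m) - C (X + m) ((m : ℤ) - (i : ℤ) - (j : ℤ) - 1)))]
  conv_lhs => rw [← hU, ← Matrix.det_mul]
  have e : (Matrix.of fun i j : Fin n =>
      C (X + m) ((j : ℤ) - (i : ℤ) + m) - C (X + m) ((m : ℤ) - (i : ℤ) - (j : ℤ) - 1)) *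
      (Matrix.of fun k j : Fin n => c j k) =
      Matrix.of fun i j : Fin n => ((X : ℚ) - m + 2 * (i : ℕ) + 1) *
        (Matrix.of fun i j : Fin n => 
        (((X + m + 2 * (j : ℕ)).factorial : ℚ) / ((m + j).factorial * (X + j + n).factorial)) *
        (Matrix.of fun i j : Fin n =>
      (∏ l ∈ Finset.range (i : ℕ), (((j : ℕ) : ℚ) + ((m : ℚ) - l))) *
      ∏ l ∈ Finset.range (n - 1 - i), (((j : ℕ) : ℚ) + (X + (i : ℕ) + 2 + l))) i j) i j := by
    ext i j
    simp only [Matrix.mul_apply, Matrix.of_apply]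
    rw [← S_entry X m n i j i.2, ← hs j (X + m) (m - i) n j.2, ← Fin.sum_univ_eq_sum_range]
    refine Finset.sum_congr rfl fun k _ => ?_
    rw [mul_comm, show (k : ℤ) - i + m = m - i + k by ring]
  rw [e, Matrix.det_mul_column, Matrix.det_mul_row,
    det_P (fun l => (m : ℚ) - l) (fun i l => (X : ℚ) + i + 2 + l)]
  simp only [Finset.prod_mul_distrib]
  rw [← Fin.prod_univ_eq_prod_range (fun i => (X : ℚ) - m + 2 * i + 1),
    ← Fin.prod_univ_eq_prod_range (fun i => 
      ((X + m + 2 * i).factorial : ℚ) / ((m + i).factorial * (X + i + n).factorial))]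
  have : ∀ i l : ℕ, (X : ℚ) + i + 2 + l - (m - i) = X - m + 2 * i + 2 + l := by
    intro i l; ring
  simp only [this]
  ring

lemma asc_range (a r : ℕ) :
    (a.factorial : ℚ) * ∏ l ∈ Finset.range r, ((a : ℚ) + 1 + l) = (a + r).factorial := by
  induction r with
  | zero => simp
  | succ r ih =>
    rw [Finset.prod_range_succ, ← mul_assoc, ih, ← add_assoc, Nat.factorial_succ]
    push_cast; ring

lemma asc_Icc (a m : ℕ) :
    (a.factorial : ℚ) * ∏ j ∈ Finset.Icc 1 m, ((a : ℚ) + j) = (a + m).factorial := by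
  induction m with
  | zero => simp
  | succ r ih =>
    rw [Finset.prod_Icc_succ_top (by omega), ← mul_assoc, ih, ← add_assoc, Nat.factorial_succ]
    push_cast; ring

lemma desc_Icc (m : ℕ) : ∀ a : ℕ,
    (a.factorial : ℚ) * ∏ j ∈ Finset.Icc 1 m, ((a : ℚ) + m + 1 - j) = (a + m).factorial := by
  induction m with
  | zero => simp
  | succ r ih =>
    intro a
    have h := ih (a + 1)
    rw [Finset.prod_Icc_succ_top (by omega), show a + (r + 1) = a + 1 + r by ring, ← h,
      Nat.factorial_succ]
    push_cast
    have : ∀ j : ℕ, (a : ℚ) + (r + 1) + 1 - j = a + 1 + r + 1 - j := by intro j; ring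
    simp only [this]
    ring

lemma inner_prod (e m n : ℕ) :
    ∏ j ∈ Finset.Icc 1 m, ((((e + m : ℕ) : ℚ) + ((n + 1 : ℕ) : ℚ) - j) *
      (((e + m : ℕ) : ℚ) + 2 * ((n + 1 : ℕ) : ℚ) + j - 2)) /
      (((((e + m : ℕ) : ℚ) + 2 * ((n + 1 : ℕ) : ℚ) - j)) * (((n + 1 : ℕ) : ℚ) + j - 1)) =
    ((e + n + m).factorial : ℚ) / (e + n).factorial *
      ((e + m + 2 * n + m).factorial / (e + m + 2 * n).factorial) *
      ((e + 2 * n + 1).factorial / (e + 2 * n + 1 + m).factorial) *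
      (n.factorial / (n + m).factorial) := by
  rw [← desc_Icc m (e + n), ← desc_Icc m (e + 2 * n + 1), ← asc_Icc n m,
    ← asc_Icc (e + m + 2 * n) m]
  rw [Finset.prod_div_distrib, Finset.prod_mul_distrib, Finset.prod_mul_distrib]
  have a1 : ∀ j : ℕ, ((e + m : ℕ) : ℚ) + ((n + 1 : ℕ) : ℚ) - j = ((e + n : ℕ) : ℚ) + m + 1 - j := by
    intro j; push_cast; ring
  have a2 : ∀ j : ℕ, ((e + m : ℕ) : ℚ) + 2 * ((n + 1 : ℕ) : ℚ) + j - 2 =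
      ((e + m + 2 * n : ℕ) : ℚ) + j := by
    intro j; push_cast; ring
  have a3 : ∀ j : ℕ, ((e + m : ℕ) : ℚ) + 2 * ((n + 1 : ℕ) : ℚ) - j =
      ((e + 2 * n + 1 : ℕ) : ℚ) + m + 1 - j := by
    intro j; push_cast; ring
  have a4 : ∀ j : ℕ, ((n + 1 : ℕ) : ℚ) + j - 1 = (n : ℚ) + j := by
    intro j; push_cast; ring
  simp only [a1, a2, a3, a4]
  have f1 : ((e + n).factorial : ℚ) ≠ 0 := by exact_mod_cast Nat.factorial_ne_zero _
  have f2 : ((e + m + 2 * n).factorial : ℚ) ≠ 0 := by exact_mod_cast Nat.factorial_ne_zero _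
  have f3 : ((e + 2 * n + 1).factorial : ℚ) ≠ 0 := by exact_mod_cast Nat.factorial_ne_zero _
  have f4 : (n.factorial : ℚ) ≠ 0 := by exact_mod_cast Nat.factorial_ne_zero _
  have f5 := desc_Icc m (e + 2 * n + 1)
  have f6 := asc_Icc n m
  have g5 : ∏ j ∈ Finset.Icc 1 m, (((e + 2 * n + 1 : ℕ) : ℚ) + m + 1 - j) ≠ 0 := by
    intro h; rw [h, mul_zero] at f5
    exact Nat.factorial_ne_zero _ (by exact_mod_cast f5.symm)
  have g6 : ∏ j ∈ Finset.Icc 1 m, ((n : ℚ) + j) ≠ 0 := by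
    intro h; rw [h, mul_zero] at f6
    exact Nat.factorial_ne_zero _ (by exact_mod_cast f6.symm)
  field_simp

lemma fact_form (e m n : ℕ) :
    ∏ i ∈ Finset.range n, ((((e + m : ℕ) : ℚ) - m + 2 * i + 1) *
      (((e + m + m + 2 * i).factorial : ℚ) / ((m + i).factorial * (e + m + i + n).factorial)) *
      (∏ l ∈ Finset.range (n - 1 - i), (((e + m : ℕ) : ℚ) - m + 2 * i + 2 + l)) * i.factorial) =
    ∏ i ∈ Finset.range n, (((e + n + i).factorial : ℚ) / (e + m + n + i).factorial *
      ((e + m + m + 2 * i).factorial * i.factorial /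
        ((e + 2 * i).factorial * (m + i).factorial))) := by
  refine Finset.prod_congr rfl fun i hi => ?_
  have hi := Finset.mem_range.mp hi
  have h := asc_range (e + 2 * i + 1) (n - 1 - i)
  rw [show e + 2 * i + 1 + (n - 1 - i) = e + n + i by omega] at h
  rw [← h, show e + m + i + n = e + m + n + i by ring, Nat.factorial_succ]
  have : ∀ l : ℕ, ((e + m : ℕ) : ℚ) - m + 2 * i + 2 + l = ((e + 2 * i + 1 : ℕ) : ℚ) + 1 + l := by
    intro l; push_cast; ring
  simp only [this]
  have f1 : ((e + 2 * i).factorial : ℚ) ≠ 0 := by exact_mod_cast Nat.factorial_ne_zero _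
  have f2 : ((e + m + n + i).factorial : ℚ) ≠ 0 := by exact_mod_cast Nat.factorial_ne_zero _
  have f3 : ((m + i).factorial : ℚ) ≠ 0 := by exact_mod_cast Nat.factorial_ne_zero _
  rw [show (((e + 2 * i + 1) * (e + 2 * i).factorial : ℕ) : ℚ) =
    ((e + m : ℕ) - m + 2 * i + 1) * (e + 2 * i).factorial by push_cast; ring]
  field_simp

lemma ratio_shift (a n : ℕ) :
    ∏ i ∈ Finset.range n, ((a + 1 + i).factorial : ℚ) =
    (∏ i ∈ Finset.range n, ((a + i).factorial : ℚ)) * ((a + n).factorial / a.factorial) := by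
  have f1 : (a.factorial : ℚ) ≠ 0 := by exact_mod_cast Nat.factorial_ne_zero _
  induction n with
  | zero => simp [f1]
  | succ n ih =>
    rw [Finset.prod_range_succ, ih, Finset.prod_range_succ,
      show a + 1 + n = a + (n + 1) by ring]
    ring

lemma fact_eq (e m n : ℕ) :
    ∏ i ∈ Finset.range n, (((e + n + i).factorial : ℚ) / (e + m + n + i).factorial *
      ((e + m + m + 2 * i).factorial * i.factorial /
        ((e + 2 * i).factorial * (m + i).factorial))) =
    ∏ i ∈ Finset.Icc 1 n, ∏ j ∈ Finset.Icc 1 m, ((((e + m : ℕ) : ℚ) + (i : ℚ) - j) *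
      (((e + m : ℕ) : ℚ) + 2 * (i : ℚ) + j - 2)) /
      (((((e + m : ℕ) : ℚ) + 2 * (i : ℚ) - j)) * ((i : ℚ) + j - 1)) := by
  induction n with
  | zero => simp
  | succ n ih =>
    rw [Finset.prod_Icc_succ_top (by omega), ← ih, inner_prod, Finset.prod_range_succ,
      Finset.prod_mul_distrib, Finset.prod_div_distrib, Finset.prod_mul_distrib,
      Finset.prod_div_distrib, ← add_assoc, ratio_shift, ← add_assoc, ratio_shift,
      show e + n + 1 + n = e + 2 * n + 1 by ring,
      show e + m + n + 1 + n = e + 2 * n + 1 + m by ring,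
      show e + n + n = e + 2 * n by ring,
      show e + m + n + n = e + m + 2 * n by ring,
      show e + m + 2 * n + m = e + m + m + 2 * n by ring,
      show e + n + m = e + m + n by ring, add_comm n m]
    have f1 : ((e + 2 * n).factorial : ℚ) ≠ 0 := by exact_mod_cast Nat.factorial_ne_zero _
    have f2 : ((e + n).factorial : ℚ) ≠ 0 := by exact_mod_cast Nat.factorial_ne_zero _
    have f3 : ((e + m + n).factorial : ℚ) ≠ 0 := by exact_mod_cast Nat.factorial_ne_zero _
    have f4 : ((e + m + 2 * n).factorial : ℚ) ≠ 0 := by exact_mod_cast Nat.factorial_ne_zero _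
    have f5 : ((m + n).factorial : ℚ) ≠ 0 := by exact_mod_cast Nat.factorial_ne_zero _
    have f6 : ((e + 2 * n + 1 + m).factorial : ℚ) ≠ 0 := by
      exact_mod_cast Nat.factorial_ne_zero _
    generalize ∏ i ∈ Finset.range n, (((e + m + m + 2 * i).factorial * i.factorial : ℚ) /
        ((e + 2 * i).factorial * (m + i).factorial)) = Z
    have f7 : ∏ i ∈ Finset.range n, ((e + m + n + i).factorial : ℚ) ≠ 0 :=
      Finset.prod_ne_zero_iff.mpr fun i _ => by exact_mod_cast Nat.factorial_ne_zero _
    rw [Finset.prod_div_distrib]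
    field_simp

theorem det_T_eq (n m : ℕ) (x : ℤ) (hx : 0 ≤ x + m)
    (h : ∀ i j : ℤ, 1 ≤ i → i ≤ n → 1 ≤ j → j ≤ m → x + 2 * i - j ≠ 0) :
    Matrix.det (Matrix.of fun i j : Fin n =>
      C (x + m).toNat ((j : ℤ) - (i : ℤ) + m) -
      C (x + m).toNat ((m : ℤ) - (i : ℤ) - (j : ℤ) - 1)) =
    ∏ i ∈ Finset.Icc 1 n, ∏ j ∈ Finset.Icc 1 m,
      (((x : ℚ) + i - j) * ((x : ℚ) + 2 * i + j - 2)) /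
      ((((x : ℚ) + 2 * i - j)) * ((i : ℚ) + j - 1)) := by
  rcases Nat.eq_zero_or_pos n with rfl | hn
  · simp
  have hcases : x ≤ -2 * n ∨ x = m - 1 ∨ (m : ℤ) ≤ x := by
    by_contra hcon
    push Not at hcon
    obtain ⟨c1, c2, c3⟩ := hcon
    by_cases c4 : 1 ≤ x + 2
    · exact h 1 (x + 2) (by omega) (by omega) (by omega) (by omega) (by ring)
    · exact h ((2 - x) / 2) (x + 2 * ((2 - x) / 2)) (by omega) (by omega) (by omega) (by omega)
        (by ring)
  rcases hcases with hc | hc | hc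
  · -- the matrix is zero
    rw [Matrix.det_eq_zero_of_row_eq_zero ⟨0, hn⟩]
    · symm
      refine Finset.prod_eq_zero (i := 1) (by simp; omega) ?_
      refine Finset.prod_eq_zero (i := (-x).toNat) (by simp; omega) ?_
      have : (((-x).toNat : ℕ) : ℚ) = -(x : ℚ) := by
        have : (((-x).toNat : ℕ) : ℤ) = -x := by omega
        exact_mod_cast this
      rw [this]
      simp
    · intro j
      have := j.2
      simp only [Matrix.of_apply]
      rw [C_gt _ _ (by push_cast; omega), C_gt _ _ (by push_cast; omega), sub_zero]
  · by_cases hm : m = 0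
    · omega
    obtain ⟨X, rfl⟩ : ∃ X, m = X + 1 := ⟨m - 1, by omega⟩
    obtain rfl : x = (X : ℤ) := by push_cast at hc; omega
    have hN : ((X : ℤ) + ((X + 1 : ℕ) : ℤ)).toNat = X + (X + 1) := by omega
    rw [hN, det_formula]
    rw [Finset.prod_eq_zero (i := 0) (by simp; omega) (by push_cast; ring)]
    symm
    refine Finset.prod_eq_zero (i := 1) (by simp; omega) ?_
    refine Finset.prod_eq_zero (i := X + 1) (by simp) ?_
    simp
  · obtain ⟨e, rfl⟩ : ∃ e : ℕ, x = ((e + m : ℕ) : ℤ) := ⟨(x - m).toNat, by push_cast; omega⟩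
    have hN : (((e + m : ℕ) : ℤ) + (m : ℤ)).toNat = e + m + m := by omega
    rw [hN, det_formula, fact_form, fact_eq]
    simp only [Int.cast_natCast]
end

section
/- Let n, m be natural numbers and let x be an integer with x + m ≥ 0. Assume that x + 2i - j ≠ 0 for all integers i, j with 1 ≤ i ≤ n and 1 ≤ j ≤ m. Then the determinant of the n×n rational matrix B_{n,m}(x) whose (i,j)-entry (for 0 ≤ i, j ≤ n-1) is C(x+m+2i, i-j+m) − C(x+m+2i, i-j+m-1) equals ∏_{i=1}^{n} ∏_{j=1}^{m} ((x+i-j)(x+2i+j-2)) / ((x+2i-j)(i+j-1)). -/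
open Finset Polynomial in
theorem newton_expand (A : ℕ → ℚ) (j : ℕ) : ∀ f : ℚ[X], f.natDegree ≤ j →
    ∃ c : ℕ → ℚ, c j = f.eval (-(A (j - 1))) ∧
      ∀ y : ℚ, f.eval y = ∑ s ∈ range (j + 1), c s * ∏ k ∈ Ico s j, (y + A k) := by
  induction j with
  | zero =>
    intro f hf
    rw [Polynomial.eq_C_of_natDegree_le_zero hf]
    exact ⟨fun _ => f.coeff 0, by simp, by simp⟩
  | succ j ih =>
    intro f hf
    obtain ⟨c, -, hc⟩ := ih (f /ₘ (X - Polynomial.C (-(A j)))) (by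
      rw [Polynomial.natDegree_divByMonic _ (Polynomial.monic_X_sub_C _)]
      simp only [Polynomial.natDegree_X_sub_C]
      omega)
    refine ⟨fun s => if s = j + 1 then f.eval (-(A j)) else c s, by simp, ?_⟩
    intro y
    have h1 := Polynomial.modByMonic_add_div f (X - Polynomial.C (-(A j)))
    rw [Polynomial.modByMonic_X_sub_C_eq_C_eval] at h1
    have h2 := congrArg (Polynomial.eval y) h1
    rw [← h2, sum_range_succ]
    simp only [Polynomial.eval_add, Polynomial.eval_C, Polynomial.eval_mul, Polynomial.eval_sub,
      Polynomial.eval_X, hc y, if_true, Ico_self, prod_empty, mul_one]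
    rw [add_comm, mul_sum]
    congr 1
    refine sum_congr rfl fun s hs => ?_
    have hs' : s < j + 1 := mem_range.1 hs
    rw [if_neg (by omega), prod_Ico_succ_top (by omega)]
    ring

open Finset Polynomial in
theorem det_monic_part (A : ℕ → ℚ) (n : ℕ) :
    Matrix.det (Matrix.of fun i s : Fin n => ∏ k ∈ Ico (s : ℕ) (n - 1), ((i : ℚ) + A k)) =
    ∏ j ∈ range n, ∏ i ∈ range j, ((i : ℚ) - j) := by
  have h0 := Matrix.det_eval_matrixOfPolynomials_eq_det_vandermonde
    (fun i : Fin n => ((Fin.rev i : Fin n) : ℚ))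
    (fun t : Fin n => ∏ k ∈ Ico ((Fin.rev t : Fin n) : ℕ) (n - 1), (X + Polynomial.C (A k)))
    (by
      intro t
      rw [Polynomial.natDegree_prod_of_monic _ _ (fun k _ => Polynomial.monic_X_add_C _)]
      simp [Fin.val_rev]
      omega)
    (fun t => Polynomial.monic_prod_of_monic _ _ (fun k _ => Polynomial.monic_X_add_C _))
  rw [← Matrix.det_submatrix_equiv_self Fin.revPerm]
  have h1 : (Matrix.of fun i s : Fin n => ∏ k ∈ Ico (s : ℕ) (n - 1), ((i : ℚ) + A k)).submatrix
      Fin.revPerm Fin.revPerm = Matrix.of (fun i t : Fin n =>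
       (∏ k ∈ Ico ((Fin.rev t : Fin n) : ℕ) (n - 1), (X + Polynomial.C (A k))).eval
        ((Fin.rev i : Fin n) : ℚ)) := by
    ext i t
    simp [Polynomial.eval_prod]
  rw [h1, ← h0, Matrix.det_vandermonde, Finset.prod_comm' (s' := fun j => Finset.Iio j) (t' := univ)
    (by simp), ← Fin.prod_univ_eq_prod_range (fun j => ∏ i ∈ range j, ((i : ℚ) - j))]
  refine prod_congr rfl fun j _ => ?_
  have h2 : range (j : ℕ) = (Finset.Iio j).map Fin.valEmbedding := by
    rw [Fin.map_valEmbedding_Iio]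
    ext; simp
  rw [h2, prod_map]
  refine prod_congr rfl fun i _ => ?_
  simp only [Fin.val_rev, Fin.valEmbedding_apply]
  rw [Nat.cast_sub (by omega), Nat.cast_sub (by omega)]
  push_cast
  ring

open Finset Polynomial in
theorem det_kratt (A B : ℕ → ℚ) (n : ℕ) :
    Matrix.det (Matrix.of fun i j : Fin n =>
      (∏ k ∈ range (j : ℕ), ((i : ℚ) + B k)) * ∏ k ∈ Ico (j : ℕ) (n - 1), ((i : ℚ) + A k)) =
    (∏ j ∈ range n, ∏ i ∈ range j, ((i : ℚ) - j)) *
      ∏ j ∈ range n, ∏ k ∈ range j, (B k - A (j - 1)) := by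
  have key : ∀ j : ℕ, ∃ c : ℕ → ℚ, c j = ∏ k ∈ range j, (B k - A (j - 1)) ∧
      ∀ y : ℚ, ∏ k ∈ range j, (y + B k) = ∑ s ∈ range (j + 1), c s * ∏ k ∈ Ico s j, (y + A k) := by
    intro j
    obtain ⟨c, h1, h2⟩ := newton_expand A j (∏ k ∈ range j, (X + Polynomial.C (B k))) (by
      rw [Polynomial.natDegree_prod_of_monic _ _ (fun k _ => Polynomial.monic_X_add_C _)]
      simp)
    refine ⟨c, ?_, ?_⟩
    · rw [h1, Polynomial.eval_prod]
      refine prod_congr rfl fun k _ => ?_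
      simp
      ring
    · intro y
      rw [← h2, Polynomial.eval_prod]
      simp
  choose c hc1 hc2 using key
  have hM : (Matrix.of fun i j : Fin n =>
      (∏ k ∈ range (j : ℕ), ((i : ℚ) + B k)) * ∏ k ∈ Ico (j : ℕ) (n - 1), ((i : ℚ) + A k)) =
      (Matrix.of fun i s : Fin n => ∏ k ∈ Ico (s : ℕ) (n - 1), ((i : ℚ) + A k)) *
      (Matrix.of fun s j : Fin n => if (s : ℕ) ≤ j then c j s else 0) := by
    ext i j
    rw [Matrix.mul_apply]
    simp only [Matrix.of_apply]
    rw [hc2, sum_mul, Fin.sum_univ_eq_sum_range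
      (fun s => (∏ k ∈ Ico s (n - 1), ((i : ℚ) + A k)) * (if s ≤ (j : ℕ) then c j s else 0)) n]
    have hj := j.2
    rw [← sum_subset (range_subset_range.2 (show (j : ℕ) + 1 ≤ n by omega))]
    · refine sum_congr rfl fun s hs => ?_
      have hs' := mem_range.1 hs
      rw [if_pos (by omega), ← prod_Ico_consecutive _ (show s ≤ j by omega)
        (show (j : ℕ) ≤ n - 1 by omega)]
      ring
    · intro s _ hs
      rw [if_neg (by simpa using hs), mul_zero]
  rw [hM, Matrix.det_mul, det_monic_part]
  congr 1
  rw [Matrix.det_of_isUpperTriangular]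
  · rw [← Fin.prod_univ_eq_prod_range (fun j => ∏ k ∈ range j, (B k - A (j - 1)))]
    refine prod_congr rfl fun j _ => ?_
    simp [hc1]
  · intro s j hsj
    have : (j : ℕ) < s := hsj
    simp only [Matrix.of_apply]
    rw [if_neg (by omega)]

theorem C_diff (a b : ℕ) : (C (a + b) a - C (a + b) ((a : ℤ) - 1)) * (a.factorial * (b + 1).factorial) =
    ((b : ℚ) + 1 - a) * (a + b).factorial := by
  rcases a with _ | c
  · simp [C, Nat.factorial_succ]
  · have e1 : C (c + 1 + b) ((c + 1 : ℕ) : ℤ) = ((c + 1 + b).choose (c + 1) : ℚ) := by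
      unfold C; rw [if_pos (by positivity)]; simp
    have e2 : C (c + 1 + b) (((c + 1 : ℕ) : ℤ) - 1) = ((c + 1 + b).choose c : ℚ) := by
      unfold C; rw [if_pos (by push_cast; omega)]; congr 2; omega
    have h1 := Nat.choose_mul_factorial_mul_factorial (show c + 1 ≤ c + 1 + b by omega)
    have h2 := Nat.choose_mul_factorial_mul_factorial (show c ≤ c + 1 + b by omega)
    rw [show c + 1 + b - (c + 1) = b by omega] at h1
    rw [show c + 1 + b - c = b + 1 by omega] at h2
    rw [e1, e2]
    have h1' : ((c + 1 + b).choose (c + 1) : ℚ) * (c + 1).factorial * b.factorial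
      = (c + 1 + b).factorial := by exact_mod_cast h1
    have h2' : ((c + 1 + b).choose c : ℚ) * c.factorial * (b + 1).factorial
      = (c + 1 + b).factorial := by exact_mod_cast h2
    rw [sub_mul, sub_mul, Nat.factorial_succ b]
    rw [Nat.factorial_succ b] at h2'
    rw [Nat.factorial_succ c] at h1' ⊢
    push_cast at h1' h2' ⊢
    linear_combination ((b : ℚ) + 1) * h1' - ((c : ℚ) + 1) * h2'

open Finset in
theorem desc_prod (M j : ℕ) (h : j ≤ M) :
    (∏ k ∈ range j, ((M : ℚ) - k)) * (M - j).factorial = M.factorial := by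
  induction j with
  | zero => simp
  | succ j ih =>
    rw [prod_range_succ, ← ih (by omega), show M - j = (M - (j + 1)) + 1 by omega,
      Nat.factorial_succ]
    have : ((M - (j + 1) : ℕ) : ℚ) = M - (j + 1) := by
      rw [Nat.cast_sub h]; push_cast; ring
    push_cast
    rw [this]
    ring

open Finset in
theorem asc_prod (q j t : ℕ) (h : j ≤ t) :
    (∏ k ∈ Ico j t, ((q : ℚ) + k + 1)) * (q + j).factorial = (q + t).factorial := by
  induction t, h using Nat.le_induction with
  | base => simp
  | succ t ht ih =>
    rw [prod_Ico_succ_top ht, ← add_assoc, Nat.factorial_succ]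
    push_cast
    rw [← ih]
    ring

open Finset in
theorem entry_eq (x m n i j : ℕ) (hj : j < n) :
    C (x + m + 2 * i) ((i : ℤ) - j + m) - C (x + m + 2 * i) ((i : ℤ) - j + m - 1) =
    (((x + m + 2 * i).factorial : ℚ) / ((m + i).factorial * (x + i + n).factorial)) *
    (((x : ℚ) - m + 2 * j + 1) *
      ((∏ k ∈ range j, ((i : ℚ) + (m - k))) * ∏ k ∈ Ico j (n - 1), ((i : ℚ) + (x + 2 + k)))) := by
  by_cases hjm : m + i < j
  · have h0 : ∏ k ∈ range j, ((i : ℚ) + (m - k)) = 0 := by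
      apply prod_eq_zero (mem_range.2 hjm)
      push_cast; ring
    rw [h0]
    unfold C
    rw [if_neg (by omega), if_neg (by omega)]
    ring
  · obtain ⟨a, ha⟩ : ∃ a, m + i = a + j := ⟨m + i - j, by omega⟩
    have hN : x + m + 2 * i = a + (x + i + j) := by omega
    have hk : (i : ℤ) - j + m = (a : ℤ) := by omega
    have h1 := C_diff a (x + i + j)
    have h2 := desc_prod (m + i) j (by omega)
    have h3 := asc_prod (x + i + 1) j (n - 1) (by omega)
    rw [show m + i - j = a by omega] at h2
    rw [show x + i + 1 + (n - 1) = x + i + n by omega,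
      show x + i + 1 + j = x + i + j + 1 by omega] at h3
    have e2 : ∏ k ∈ range j, ((i : ℚ) + (m - k)) = ∏ k ∈ range j, (((m + i : ℕ) : ℚ) - k) :=
      prod_congr rfl fun k _ => by push_cast; ring
    have e3 : ∏ k ∈ Ico j (n - 1), ((i : ℚ) + (x + 2 + k)) =
        ∏ k ∈ Ico j (n - 1), (((x + i + 1 : ℕ) : ℚ) + k + 1) :=
      prod_congr rfl fun k _ => by push_cast; ring
    rw [e2, e3, hN, hk, ← h2, ← h3]
    have ha' : (m : ℚ) + i = a + j := by exact_mod_cast ha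
    have f1 : (a.factorial : ℚ) ≠ 0 := by positivity
    have f2 : ((x + i + j + 1).factorial : ℚ) ≠ 0 := by positivity
    have f3 : (∏ k ∈ range j, (((m + i : ℕ) : ℚ) - k)) ≠ 0 := by
      intro h; rw [h, zero_mul] at h2
      have : ((m + i).factorial : ℚ) ≠ 0 := by positivity
      exact this h2.symm
    have f4 : (∏ k ∈ Ico j (n - 1), (((x + i + 1 : ℕ) : ℚ) + k + 1)) ≠ 0 := by
      positivity
    generalize (∏ k ∈ range j, (((m + i : ℕ) : ℚ) - k)) = P at *
    generalize (∏ k ∈ Ico j (n - 1), (((x + i + 1 : ℕ) : ℚ) + k + 1)) = Q at *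
    have h4 : (x : ℚ) - m + 2 * j + 1 = ((x + i + j : ℕ) : ℚ) + 1 - a := by
      push_cast; linarith
    rw [h4]
    field_simp
    linear_combination h1

open Finset in
theorem row_eq (x n m : ℕ) (h : ∀ j ∈ Icc 1 m, (x : ℚ) + 2 * (n + 1) - j ≠ 0) :
    (∏ j ∈ Icc 1 m, (((x : ℚ) + (n + 1) - j) * ((x : ℚ) + 2 * (n + 1) + j - 2)) /
      ((((x : ℚ) + 2 * (n + 1) - j)) * (((n : ℚ) + 1) + j - 1))) *
      ((m + n).factorial * (x + 2 * n + 1).factorial * (x + 2 * n).factorial) =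
    (∏ l ∈ range (n + 1), ((x : ℚ) - m + n + 1 + l)) *
      ((x + m + 2 * n).factorial * n.factorial * (x + n).factorial) := by
  induction m with
  | zero =>
    have h3 := asc_prod (x + n) 0 (n + 1) (by omega)
    rw [show Ico 0 (n + 1) = range (n + 1) by ext; simp] at h3
    have e3 : ∏ l ∈ range (n + 1), ((x : ℚ) - (0 : ℕ) + n + 1 + l) =
      ∏ k ∈ range (n + 1), (((x + n : ℕ) : ℚ) + k + 1) :=
      prod_congr rfl fun k _ => by push_cast; ring
    rw [e3]
    rw [show x + n + (n + 1) = x + 2 * n + 1 by ring] at h3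
    simp only [add_zero, zero_add] at h3 ⊢
    simp only [show Icc 1 0 = (∅ : Finset ℕ) from rfl, prod_empty]
    linear_combination -(((x + 2 * n).factorial : ℚ) * n.factorial) * h3
  | succ m ih =>
    have ih := ih (fun j hj => h j (by simp at hj ⊢; omega))
    have hm := h (m + 1) (by simp)
    rw [prod_Icc_succ_top (by omega)]
    have hE : (∏ l ∈ range (n + 1), ((x : ℚ) - (m + 1 : ℕ) + n + 1 + l)) * ((x : ℚ) - m + 2 * n + 1)
        = ((x : ℚ) - m + n) * ∏ l ∈ range (n + 1), ((x : ℚ) - m + n + 1 + l) := by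
      rw [prod_range_succ', prod_range_succ]
      have : ∏ k ∈ range n, ((x : ℚ) - (m + 1 : ℕ) + n + 1 + (k + 1 : ℕ)) =
          ∏ l ∈ range n, ((x : ℚ) - m + n + 1 + l) :=
        prod_congr rfl fun k _ => by push_cast; ring
      rw [this]
      push_cast; ring
    generalize (∏ l ∈ range (n + 1), ((x : ℚ) - (m + 1 : ℕ) + n + 1 + l)) = E' at *
    generalize (∏ l ∈ range (n + 1), ((x : ℚ) - m + n + 1 + l)) = E at *
    generalize (∏ j ∈ Icc 1 m, (((x : ℚ) + (n + 1) - j) * ((x : ℚ) + 2 * (n + 1) + j - 2)) /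
      ((((x : ℚ) + 2 * (n + 1) - j)) * (((n : ℚ) + 1) + j - 1))) = R at *
    rw [show m + 1 + n = m + n + 1 by ring, show x + (m + 1) + 2 * n = x + m + 2 * n + 1 by ring,
      Nat.factorial_succ (m + n), Nat.factorial_succ (x + m + 2 * n)]
    push_cast at hm ⊢
    have hm' : (x : ℚ) - m + 2 * n + 1 ≠ 0 := by
      intro h; apply hm; linarith
    have hn : (n : ℚ) + m + 1 ≠ 0 := by positivity
    rw [show (n : ℚ) + 1 + (m + 1) - 1 = n + m + 1 by ring,
      show (x : ℚ) + 2 * (n + 1) - (m + 1) = (x : ℚ) - m + 2 * n + 1 by ring]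
    apply mul_right_cancel₀ hm'
    have : R * ((x + (n + 1) - (m + 1)) * (x + 2 * (n + 1) + (m + 1) - 2) / (((x : ℚ) - m + 2 * n + 1) * (n + m + 1))) *
        ((m + n + 1) * (m + n).factorial * (x + 2 * n + 1).factorial * (x + 2 * n).factorial) *
        ((x : ℚ) - m + 2 * n + 1) = (x + n - m) * (x + 2 * n + m + 1) *
        (R * ((m + n).factorial * (x + 2 * n + 1).factorial * (x + 2 * n).factorial)) := by
      generalize (x : ℚ) - m + 2 * n + 1 = D at *
      have hn2 : (m : ℚ) + n + 1 = n + m + 1 := by ring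
      rw [hn2]
      generalize (n : ℚ) + m + 1 = D2 at *
      field_simp
      ring
    rw [this, ih]
    linear_combination -((x : ℚ) + m + 2 * n + 1) *
      ((x + m + 2 * n).factorial * n.factorial * (x + n).factorial) * hE

open Finset in
theorem final_prod (x m n : ℕ)
    (h : ∀ i ∈ Icc 1 n, ∀ j ∈ Icc 1 m, (x : ℚ) + 2 * i - j ≠ 0) :
    (∏ i ∈ range n, (((x + m + 2 * i).factorial : ℚ) / ((m + i).factorial * (x + i + n).factorial))) *
    ((∏ j ∈ range n, ((x : ℚ) - m + 2 * j + 1)) *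
      ∏ j ∈ range n, ∏ k ∈ range j, (((j : ℚ) - k) * ((x : ℚ) - m + j + 1 + k))) =
    ∏ i ∈ Icc 1 n, ∏ j ∈ Icc 1 m,
      (((x : ℚ) + i - j) * ((x : ℚ) + 2 * i + j - 2)) /
      ((((x : ℚ) + 2 * i - j)) * ((i : ℚ) + j - 1)) := by
  induction n with
  | zero => simp
  | succ n ih =>
    rw [prod_Icc_succ_top (by omega), ← ih (fun i hi => h i (by simp at hi ⊢; omega))]
    have hr := row_eq x n m (fun j hj => by
      have := h (n + 1) (by simp) j hj
      push_cast at this; exact this)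
    push_cast
    have e1 : ∏ i ∈ range n, (((x + m + 2 * i).factorial : ℚ) /
        ((m + i).factorial * (x + i + (n + 1)).factorial)) =
        (∏ i ∈ range n, (((x + m + 2 * i).factorial : ℚ) /
        ((m + i).factorial * (x + i + n).factorial))) * ((x + n).factorial / (x + 2 * n).factorial) := by
      have h3 := asc_prod (x + n) 0 n (by omega)
      rw [show Ico 0 n = range n by ext; simp, add_zero, show x + n + n = x + 2 * n by ring] at h3
      rw [← h3]
      have : (((x + n).factorial : ℚ) /
        ((∏ k ∈ range n, (((x + n : ℕ) : ℚ) + k + 1)) * (x + n).factorial)) =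
          ∏ k ∈ range n, (((x + n : ℕ) : ℚ) + k + 1)⁻¹ := by
        rw [prod_inv_distrib]
        have : (∏ k ∈ range n, (((x + n : ℕ) : ℚ) + k + 1)) ≠ 0 := by positivity
        field_simp
      rw [this, ← prod_mul_distrib]
      refine prod_congr rfl fun i _ => ?_
      rw [← add_assoc, Nat.factorial_succ]
      have : (((x + n : ℕ) : ℚ) + i + 1) = ((x + i + n + 1 : ℕ) : ℚ) := by push_cast; ring
      rw [this]
      push_cast
      have : (x : ℚ) + i + n + 1 ≠ 0 := by positivity
      field_simp
    have e2 : ∏ k ∈ range n, (((n : ℚ) - k) * ((x : ℚ) - m + n + 1 + k)) =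
        n.factorial * ∏ k ∈ range n, ((x : ℚ) - m + n + 1 + k) := by
      rw [prod_mul_distrib]
      have := desc_prod n n le_rfl
      simp at this
      rw [this]
    rw [prod_range_succ _ n, prod_range_succ _ n, prod_range_succ _ n, e1, e2]
    rw [prod_range_succ _ n] at hr
    rw [show x + n + (n + 1) = x + 2 * n + 1 by ring]
    generalize (∏ j ∈ Icc 1 m, (((x : ℚ) + (n + 1) - j) * ((x : ℚ) + 2 * (n + 1) + j - 2)) /
      ((((x : ℚ) + 2 * (n + 1) - j)) * (((n : ℚ) + 1) + j - 1))) = R at *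
    have hR : R = (((∏ l ∈ range n, ((x : ℚ) - m + n + 1 + l)) * ((x : ℚ) - m + n + 1 + n)) *
      ((x + m + 2 * n).factorial * n.factorial * (x + n).factorial)) /
      ((m + n).factorial * (x + 2 * n + 1).factorial * (x + 2 * n).factorial) := by
      rw [eq_div_iff (by positivity)]
      exact hr
    rw [hR]
    field_simp
    ring

open Finset in
theorem det_nat (n m x : ℕ)
    (h : ∀ i ∈ Icc 1 n, ∀ j ∈ Icc 1 m, (x : ℚ) + 2 * i - j ≠ 0) :
    Matrix.det (Matrix.of fun i j : Fin n =>
      C (x + m + 2 * (i : ℕ)) ((i : ℤ) - (j : ℤ) + m) -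
      C (x + m + 2 * (i : ℕ)) ((i : ℤ) - (j : ℤ) + m - 1)) =
    ∏ i ∈ Finset.Icc 1 n, ∏ j ∈ Finset.Icc 1 m,
      (((x : ℚ) + i - j) * ((x : ℚ) + 2 * i + j - 2)) /
      ((((x : ℚ) + 2 * i - j)) * ((i : ℚ) + j - 1)) := by
  rw [← final_prod x m n h]
  have hM : (Matrix.of fun i j : Fin n =>
      C (x + m + 2 * (i : ℕ)) ((i : ℤ) - (j : ℤ) + m) -
      C (x + m + 2 * (i : ℕ)) ((i : ℤ) - (j : ℤ) + m - 1)) =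
      Matrix.of fun i j : Fin n =>
        (((x + m + 2 * (i : ℕ)).factorial : ℚ) / ((m + i).factorial * (x + i + n).factorial)) *
        (Matrix.of (fun i j : Fin n => ((x : ℚ) - m + 2 * (j : ℕ) + 1) *
          (Matrix.of (fun i j : Fin n => (∏ k ∈ range (j : ℕ), ((i : ℚ) + (m - k))) *
            ∏ k ∈ Ico (j : ℕ) (n - 1), ((i : ℚ) + (x + 2 + k)))) i j)) i j := by
    ext i j
    simp only [Matrix.of_apply]
    exact entry_eq x m n i j j.2
  rw [hM, Matrix.det_mul_column, Matrix.det_mul_row,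
    det_kratt (fun k => (x : ℚ) + 2 + k) (fun k => (m : ℚ) - k) n,
    Fin.prod_univ_eq_prod_range (fun i => (((x + m + 2 * i).factorial : ℚ) /
      ((m + i).factorial * (x + i + n).factorial))),
    Fin.prod_univ_eq_prod_range (fun j => ((x : ℚ) - m + 2 * j + 1))]
  congr 2
  rw [← prod_mul_distrib]
  refine prod_congr rfl fun j _ => ?_
  rw [← prod_mul_distrib]
  refine prod_congr rfl fun k hk => ?_
  have : 1 ≤ j := by have := mem_range.1 hk; omega
  rw [Nat.cast_sub this]
  push_cast
  ring

theorem det_B_eq (n m : ℕ) (x : ℤ) (hx : 0 ≤ x + m)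
    (h : ∀ i j : ℤ, 1 ≤ i → i ≤ n → 1 ≤ j → j ≤ m → x + 2 * i - j ≠ 0) :
    Matrix.det (Matrix.of fun i j : Fin n =>
      C (x + m + 2 * (i : ℕ)).toNat ((i : ℤ) - (j : ℤ) + m) -
      C (x + m + 2 * (i : ℕ)).toNat ((i : ℤ) - (j : ℤ) + m - 1)) =
    ∏ i ∈ Finset.Icc 1 n, ∏ j ∈ Finset.Icc 1 m,
      (((x : ℚ) + i - j) * ((x : ℚ) + 2 * i + j - 2)) /
      ((((x : ℚ) + 2 * i - j)) * ((i : ℚ) + j - 1)) := by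
  rcases lt_or_ge x 0 with hneg | hpos
  · rcases Nat.eq_zero_or_pos n with rfl | hn
    · simp
    · obtain ⟨y, rfl⟩ : ∃ y : ℕ, x = -(y : ℤ) := ⟨x.natAbs, by omega⟩
      have hyn : n < y := by
        by_contra hc
        exact h y y (by omega) (by omega) (by omega) (by omega) (by ring)
      rw [Matrix.det_eq_zero_of_row_eq_zero (⟨0, hn⟩ : Fin n), eq_comm]
      · apply Finset.prod_eq_zero (i := 1) (by simp; omega)
        apply Finset.prod_eq_zero (i := y) (by simp; omega)
        push_cast
        ring
      · intro j
        have hj := j.2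
        have hz : ∀ (N : ℕ) (k : ℤ), (N : ℤ) < k → C N k = 0 := by
          intro N k hk
          unfold C
          rw [if_pos (by omega), Nat.choose_eq_zero_of_lt (by omega)]
          simp
        simp only [Matrix.of_apply]
        rw [hz _ _ (by simp; omega), hz _ _ (by simp; omega), sub_zero]
  · obtain ⟨y, rfl⟩ := Int.eq_ofNat_of_zero_le hpos
    have := det_nat n m y (fun i hi j hj => by
      have hi := Finset.mem_Icc.1 hi
      have hj := Finset.mem_Icc.1 hj
      have := h i j (by omega) (by omega) (by omega) (by omega)
      intro h0
      apply this
      exact_mod_cast h0)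
    have e : ∀ i : ℕ, ((y : ℤ) + m + 2 * i).toNat = y + m + 2 * i := by intro i; omega
    simp only [e, Int.cast_natCast]
    exact this
end

section
/- Let n, m be natural numbers with m ≥ 1. Then the determinant of the n×n rational matrix whose (i,j)-entry (for 0 ≤ i, j ≤ n-1) is C(2m, j-i+m) − C(2m, m-i-j-1) equals ∏_{1 ≤ i ≤ j ≤ m-1} (2n+i+j) / (i+j). -/
namespace DetA

def av (r k : ℕ) : ℚ := (2*k+2*r+1)*(2*k+2*r+2)/((2*k+r+1)*(2*k+r+2))
def bv (r k : ℕ) : ℚ := 2*k*(2*k+1)/((2*k+r)*(2*k+r+1))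

def Uo (r : ℕ) : Module.End ℚ (ℕ → ℚ) where
  toFun f := fun i => av r i * f i + f (i+1)
  map_add' f g := by funext i; simp; ring
  map_smul' c f := by funext i; simp; ring

def Lo (r : ℕ) : Module.End ℚ (ℕ → ℚ) where
  toFun f := fun i => f i + bv r i * f (i-1)
  map_add' f g := by funext i; simp; ring
  map_smul' c f := by funext i; simp; ring

lemma Uo_apply (r : ℕ) (f : ℕ → ℚ) (i : ℕ) : Uo r f i = av r i * f i + f (i+1) := rfl
lemma Lo_apply (r : ℕ) (f : ℕ → ℚ) (i : ℕ) : Lo r f i = f i + bv r i * f (i-1) := rfl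

lemma bv_zero (r : ℕ) : bv r 0 = 0 := by simp [bv]

lemma qd_sum (r k : ℕ) : av (r+1) k + bv (r+1) k = av r k + bv r (k+1) := by
  unfold av bv
  push_cast
  have h1 : (2*(k:ℚ)+r+1) ≠ 0 := by positivity
  have h2 : (2*(k:ℚ)+r+2) ≠ 0 := by positivity
  have h3 : (2*(k:ℚ)+r+3) ≠ 0 := by positivity
  rw [show (2*(k:ℚ)+(r+1)+1) = 2*k+r+2 by ring, show (2*(k:ℚ)+(r+1)+2) = 2*k+r+3 by ring,
    show (2*(k:ℚ)+(r+1)) = 2*k+r+1 by ring, show (2*((k:ℚ)+1)+r) = 2*k+r+2 by ring,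
    show (2*(k:ℚ)+r+2+1) = 2*k+r+3 by ring]
  field_simp
  ring

lemma qd_mul (r k : ℕ) : bv (r+1) (k+1) * av (r+1) k = av r (k+1) * bv r (k+1) := by
  unfold av bv
  push_cast
  have h1 : (2*(k:ℚ)+r+2) ≠ 0 := by positivity
  have h2 : (2*(k:ℚ)+r+3) ≠ 0 := by positivity
  have h3 : (2*(k:ℚ)+r+4) ≠ 0 := by positivity
  rw [show (2*(k:ℚ)+(r+1)+1) = 2*k+r+2 by ring, show (2*(k:ℚ)+(r+1)+2) = 2*k+r+3 by ring,
    show (2*((k:ℚ)+1)+(r+1)) = 2*k+r+3 by ring, show (2*((k:ℚ)+1)+r) = 2*k+r+2 by ring,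
    show (2*(k:ℚ)+r+2+1) = 2*k+r+3 by ring, show (2*(k:ℚ)+r+3+1) = 2*k+r+4 by ring,
    show (2*(k:ℚ)+r+2+2) = 2*k+r+4 by ring]
  field_simp
  ring

lemma qd (r : ℕ) : Uo r * Lo r = Lo (r+1) * Uo (r+1) := by
  ext1 f
  funext i
  simp only [Module.End.mul_apply, Uo_apply, Lo_apply]
  rcases i with _ | k
  · have := qd_sum r 0
    simp only [bv_zero] at *
    simp only [Nat.add_sub_cancel]
    linear_combination (-f 0) * this
  · have h1 := qd_sum r (k+1)
    have h2 := qd_mul r k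
    simp only [Nat.add_sub_cancel]
    linear_combination (-f (k+1)) * h1 - f k * h2

def Lm : ℕ → Module.End ℚ (ℕ → ℚ)
  | 0 => 1
  | m+1 => Lm m * Lo m
def Um : ℕ → Module.End ℚ (ℕ → ℚ)
  | 0 => 1
  | m+1 => Uo m * Um m

lemma Um_J (m : ℕ) : Um m * (Lo 0 * Uo 0) = (Lo m * Uo m) * Um m := by
  induction m with
  | zero => simp [Um]
  | succ m ih =>
    rw [Um, mul_assoc, ih, ← qd]
    simp only [mul_assoc]

lemma J_pow (m : ℕ) : (Lo 0 * Uo 0)^m = Lm m * Um m := by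
  induction m with
  | zero => simp [Um, Lm]
  | succ m ih =>
    rw [pow_succ, ih, mul_assoc, Um_J, Lm, Um]
    simp only [mul_assoc]

def e (j : ℕ) : ℕ → ℚ := Pi.single j 1

lemma Um_upper (m j k : ℕ) (h : j < k) : Um m (e j) k = 0 := by
  induction m generalizing k with
  | zero => simp [Um, e, Pi.single_apply, h.ne']
  | succ m ih =>
    rw [Um, Module.End.mul_apply, Uo_apply, ih k h, ih (k+1) (by omega)]; simp

lemma Um_diag (m j : ℕ) : Um m (e j) j = ∏ r ∈ Finset.range m, av r j := by
  induction m with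
  | zero => simp [Um, e]
  | succ m ih =>
    rw [Um, Module.End.mul_apply, Uo_apply, ih, Um_upper m j (j+1) (by omega),
      Finset.prod_range_succ]; ring

lemma Lo_e (r j : ℕ) : Lo r (e j) = e j + bv r (j+1) • e (j+1) := by
  funext i
  rw [Lo_apply]
  rcases i with _ | i
  · simp [bv_zero, e, Pi.single_apply]
  · by_cases h : i = j
    · subst h; simp [e]
    · simp [e, Pi.single_apply, h]

lemma Lm_lower (m j k : ℕ) (h : k < j) : Lm m (e j) k = 0 := by
  induction m generalizing j with
  | zero => simp [Lm, e, Pi.single_apply, h.ne]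
  | succ m ih =>
    rw [Lm, Module.End.mul_apply, Lo_e, map_add, map_smul]
    simp [ih j h, ih (j+1) (by omega)]

lemma Lm_diag (m j : ℕ) : Lm m (e j) j = 1 := by
  induction m with
  | zero => simp [Lm, e]
  | succ m ih =>
    rw [Lm, Module.End.mul_apply, Lo_e, map_add, map_smul]
    simp [ih, Lm_lower m (j+1) j (by omega)]

lemma expand (n : ℕ) (f : ℕ → ℚ) (h : ∀ k, n ≤ k → f k = 0) :
    f = ∑ k : Fin n, f k • e k := by
  funext i
  rw [Finset.sum_apply, Fin.sum_univ_eq_sum_range (fun k => (f k • e k) i)]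
  simp only [e, Pi.smul_apply, Pi.single_apply, smul_eq_mul, mul_ite, mul_one, mul_zero,
    Finset.sum_ite_eq, Finset.mem_range]
  split_ifs with hi
  · rfl
  · exact h i (by omega)

lemma det_J (n m : ℕ) : Matrix.det (Matrix.of fun i j : Fin n => ((Lo 0 * Uo 0)^m) (e j) i) =
    ∏ k : Fin n, ∏ r ∈ Finset.range m, av r k := by
  have : (Matrix.of fun i j : Fin n => ((Lo 0 * Uo 0)^m) (e j) i) =
      (Matrix.of fun i j : Fin n => Lm m (e j) i) * (Matrix.of fun i j : Fin n => Um m (e j) i) := by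
    ext i j
    rw [Matrix.mul_apply, Matrix.of_apply, J_pow, Module.End.mul_apply,
      expand n (Um m (e j)) (fun k hk => Um_upper m j k (by omega)), map_sum, Finset.sum_apply]
    refine Finset.sum_congr rfl fun k _ => ?_
    simp [mul_comm]
  rw [this, Matrix.det_mul, Matrix.det_of_lowerTriangular, Matrix.det_of_upperTriangular]
  · simp [Lm_diag, Um_diag]
  · intro i j h
    exact Um_upper m j i h
  · intro i j h
    exact Lm_lower m j i h

lemma C_pascal (N : ℕ) (k : ℤ) : C (N+1) k = C N k + C N (k-1) := by
  unfold C
  rcases lt_trichotomy k 0 with h | h | h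
  · rw [if_neg (by omega), if_neg (by omega), if_neg (by omega)]; simp
  · subst h; simp
  · obtain ⟨l, rfl⟩ : ∃ l : ℕ, k = l + 1 := ⟨(k-1).toNat, by omega⟩
    rw [if_pos (by omega), if_pos (by omega), if_pos (by omega),
      show ((l:ℤ)+1).toNat = l+1 by omega, show ((l:ℤ)+1-1).toNat = l by omega,
      Nat.choose_succ_succ]
    push_cast; ring

lemma C_pascal2 (m : ℕ) (k : ℤ) :
    C (2*(m+1)) (k+1) = C (2*m) (k+1) + 2 * C (2*m) k + C (2*m) (k-1) := by
  rw [show 2*(m+1) = 2*m+1+1 by ring, C_pascal, C_pascal, C_pascal (2*m) (k+1-1),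
    show k+1-1 = k by ring]
  ring

lemma C_symm (N : ℕ) (k l : ℤ) (h : k + l = N) : C N k = C N l := by
  unfold C
  by_cases hk : 0 ≤ k
  · by_cases hl : 0 ≤ l
    · rw [if_pos hk, if_pos hl, Nat.choose_symm_of_eq_add (a := k.toNat) (b := l.toNat) (by omega)]
    · rw [if_pos hk, if_neg hl, Nat.choose_eq_zero_of_lt (by omega)]; simp
  · rw [if_neg hk, if_pos (by omega), Nat.choose_eq_zero_of_lt (by omega)]; simp

lemma av_zero (k : ℕ) : av 0 k = 1 := by
  unfold av
  rw [div_eq_one_iff_eq (by positivity)]; push_cast; ring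

lemma bv_zero_succ (k : ℕ) : bv 0 (k+1) = 1 := by
  unfold bv
  rw [div_eq_one_iff_eq (by positivity)]; push_cast; ring

lemma entry (m i j : ℕ) : ((Lo 0 * Uo 0)^m) (e j) i =
    C (2 * m) ((j : ℤ) - (i : ℤ) + m) - C (2 * m) ((m : ℤ) - (i : ℤ) - (j : ℤ) - 1) := by
  induction m generalizing i with
  | zero =>
    have h2 : C (2*0) (((0:ℕ):ℤ) - i - j - 1) = 0 := by
      unfold C; rw [if_neg (by omega)]
    rw [h2]
    simp only [pow_zero, Module.End.one_apply, e, Pi.single_apply, sub_zero]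
    unfold C
    split_ifs with h1 h3 h3
    · subst h1; simp
    · omega
    · rw [Nat.choose_eq_zero_of_lt (by omega)]; simp
    · rfl
  | succ m ih =>
    rw [pow_succ', Module.End.mul_apply]
    generalize ((Lo 0 * Uo 0)^m) (e j) = f at ih
    have p1 := C_pascal2 m ((j:ℤ) - i + m)
    have p2 := C_pascal2 m ((m:ℤ) - i - j - 1)
    rw [show ((j:ℤ) - i + (m+1:ℕ)) = (j:ℤ) - i + m + 1 by push_cast; ring,
      show (((m+1:ℕ):ℤ) - i - j - 1) = (m:ℤ) - i - j - 1 + 1 by push_cast; ring, p1, p2]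
    rw [Module.End.mul_apply, Lo_apply, Uo_apply, Uo_apply]
    rcases i with _ | i
    · rw [bv_zero, av_zero, ih, ih]
      have s1 := C_symm (2*m) ((j:ℤ)+m) (m-j) (by push_cast; ring)
      have s2 := C_symm (2*m) ((j:ℤ)+m+1) (m-j-1) (by push_cast; ring)
      push_cast
      simp only [sub_zero, zero_add] at *
      rw [show (m:ℤ)-j-1+1 = m-j by ring, show (j:ℤ)-1+m = j+m-1 by ring,
        show (m:ℤ)-1-j-1=m-j-1-1 by ring]
      linear_combination -s1 - s2
    · rw [bv_zero_succ, av_zero, av_zero]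
      simp only [Nat.add_sub_cancel]
      rw [ih, ih, ih]
      push_cast
      rw [show (j:ℤ)-(i+1+1)+m = j-(i+1)+m-1 by ring, show (j:ℤ)-i+m = j-(i+1)+m+1 by ring,
        show (m:ℤ)-(i+1+1)-j-1 = m-(i+1)-j-1-1 by ring, show (m:ℤ)-i-j-1 = m-(i+1)-j-1+1 by ring]
      ring

lemma tele (n r s : ℕ) : (∏ i ∈ Finset.Icc 1 s, (2*((n+1:ℕ):ℚ) + i + r))
    * ((2*n+r+1)*(2*n+r+2)) = 
    (∏ i ∈ Finset.Icc 1 s, (2*(n:ℚ) + i + r)) * ((2*n+r+s+1)*(2*n+r+s+2)) := by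
  induction s with
  | zero => simp
  | succ s ih =>
    rw [Finset.prod_Icc_succ_top (by omega), Finset.prod_Icc_succ_top (by omega)]
    push_cast at *
    linear_combination (2*((n:ℚ)+1) + (s+1) + r) * ih

lemma prod_av (n r : ℕ) : ∏ k ∈ Finset.range n, av r k =
    ∏ i ∈ Finset.Icc 1 r, (2*(n:ℚ) + i + r) / (i + r) := by
  induction n with
  | zero =>
    symm
    apply Finset.prod_eq_one
    intro i hi
    have := (Finset.mem_Icc.1 hi).1
    have : (i:ℚ) + r ≠ 0 := by positivity
    simp [this]
  | succ n ih =>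
    rw [Finset.prod_range_succ, ih]
    simp only [Finset.prod_div_distrib]
    have h := tele n r r
    have h1 : ∏ i ∈ Finset.Icc 1 r, ((i:ℚ) + r) ≠ 0 := by
      apply Finset.prod_ne_zero_iff.2
      intro i hi
      have := (Finset.mem_Icc.1 hi).1
      positivity
    have h2 : ((2*(n:ℚ)+r+1)*(2*n+r+2)) ≠ 0 := by positivity
    unfold av
    rw [div_mul_div_comm, div_eq_div_iff (mul_ne_zero h1 h2) h1]
    linear_combination (-∏ i ∈ Finset.Icc 1 r, ((i:ℚ) + r)) * h

lemma prod_rhs (n M : ℕ) : ∏ i ∈ Finset.Icc 1 M, ∏ j ∈ Finset.Icc i M,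
      ((2 * (n : ℚ) + i + j)) / ((i : ℚ) + j) =
    ∏ r ∈ Finset.range (M+1), ∏ i ∈ Finset.Icc 1 r, (2*(n:ℚ) + i + r) / (i + r) := by
  have : ∏ r ∈ Finset.range (M+1), ∏ i ∈ Finset.Icc 1 r, (2*(n:ℚ) + i + r) / (i + r) =
    ∏ r ∈ Finset.range (M+1), ∏ i ∈ Finset.Icc 1 r, (fun i r : ℕ => (2*(n:ℚ) + i + r) / (i + r)) i r := rfl
  rw [this]
  apply Finset.prod_comm'
  intro x y
  simp only [Finset.mem_Icc, Finset.mem_range]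
  omega

end DetA

theorem det_A_eq (n m : ℕ) (hm : 1 ≤ m) :
    Matrix.det (Matrix.of fun i j : Fin n =>
      C (2 * m) ((j : ℤ) - (i : ℤ) + m) -
      C (2 * m) ((m : ℤ) - (i : ℤ) - (j : ℤ) - 1)) =
    ∏ i ∈ Finset.Icc 1 (m - 1), ∏ j ∈ Finset.Icc i (m - 1),
      ((2 * (n : ℚ) + i + j)) / ((i : ℚ) + j) := by
  rw [DetA.prod_rhs, Nat.sub_add_cancel hm]
  simp only [← DetA.entry, ← DetA.prod_av]
  rw [DetA.det_J, Fin.prod_univ_eq_prod_range (fun k => ∏ r ∈ Finset.range m, DetA.av r k),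
    Finset.prod_comm]
end

section
/- Let a, b, c be natural numbers, and for an integer k set u_k = C(a+b, a−k). Assume that b + 2i − j − 1 ≠ 0 for all integers i, j with 1 ≤ i ≤ c and 1 ≤ j ≤ a. Then the determinant of the c×c rational matrix whose (i,j)-entry (for 0 ≤ i, j ≤ c-1) is u_{i−j} + u_{i+j+1} equals ∏_{i=1}^{c} ∏_{j=1}^{a} ((b+i−j)(b+2i+j−1)) / ((b+2i−j−1)(i+j−1)). -/
/-- `u a b k = C(a+b, a-k)`. -/
def u (a b : ℕ) (k : ℤ) : ℚ := C (a + b) ((a : ℤ) - k)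

theorem C_pascal (N : ℕ) (k : ℤ) : C (N+1) k = C N k + C N (k-1) := by
  unfold C
  rcases lt_trichotomy k 0 with hk | hk | hk
  · rw [if_neg (by omega), if_neg (by omega), if_neg (by omega)]; simp
  · subst hk; simp
  · rw [if_pos (by omega), if_pos (by omega), if_pos (by omega)]
    obtain ⟨m, rfl⟩ : ∃ m : ℕ, k = m + 1 := ⟨(k-1).toNat, by omega⟩
    have h1 : ((m:ℤ)+1).toNat = m+1 := by omega
    have h2 : ((m:ℤ)+1-1).toNat = m := by omega
    rw [h1, h2, Nat.choose_succ_succ]; push_cast; ring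

theorem C_vandermonde (n : ℕ) : ∀ (N : ℕ) (k : ℤ),
    ∑ m ∈ Finset.range (n+1), (n.choose m : ℚ) * C N (k - m) = C (N+n) k := by
  induction n with
  | zero => intro N k; simp
  | succ n ih =>
    intro N k
    have e : N + (n+1) = (N+n)+1 := by ring
    rw [e, C_pascal, ← ih N k, ← ih N (k-1), Finset.sum_range_succ']
    have h1 : ∀ m ∈ Finset.range (n+1), ((n+1).choose (m+1) : ℚ) * C N (k - ((m+1:ℕ):ℤ))
        = (n.choose (m+1) : ℚ) * C N (k - ((m+1:ℕ):ℤ)) + (n.choose m : ℚ) * C N (k - 1 - m) := by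
      intro m _
      rw [Nat.choose_succ_succ, show k - 1 - (m:ℤ) = k - ((m+1:ℕ):ℤ) by push_cast; ring]
      push_cast; ring
    rw [Finset.sum_congr rfl h1, Finset.sum_add_distrib]
    have h2 := Finset.sum_range_succ' (fun m : ℕ => (n.choose m : ℚ) * C N (k - m)) (n+1)
    rw [Finset.sum_range_succ] at h2
    simp only [Nat.choose_succ_self, Nat.cast_zero, zero_mul, add_zero] at h2
    rw [h2]
    simp only [Nat.choose_zero_right, Nat.cast_zero]
    ring

theorem col_sum (a b i j : ℕ) :
    ∑ l ∈ Finset.range (j+1), (u a b ((i:ℤ) - l) + u a b ((i:ℤ) + l + 1)) *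
      ((2*j+1).choose (j-l) : ℚ) = C (a+b+(2*j+1)) ((a:ℤ)+j-i) := by
  rw [← C_vandermonde, show 2*j+1+1 = (j+1)+(j+1) by ring, Finset.sum_range_add _ (j+1) (j+1),
    ← Finset.sum_range_reflect (fun m : ℕ => ((2*j+1).choose m : ℚ) *
      C (a+b) ((a:ℤ)+j-i-m)) (j+1), ← Finset.sum_add_distrib]
  apply Finset.sum_congr rfl
  intro l hl
  have hl : l ≤ j := by simpa [Nat.lt_succ_iff] using hl
  unfold u
  have e : (2*j+1).choose (j+1+l) = (2*j+1).choose (j-l) := by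
    rw [← Nat.choose_symm (by omega)]; congr 1; omega
  rw [e, show j + 1 - 1 - l = j - l by omega]
  rw [show (a:ℤ) + j - i - ((j-l:ℕ):ℤ) = a - (i - l) by omega,
    show (a:ℤ) + j - i - ((j+1+l:ℕ):ℤ) = a - (i + l + 1) by omega]
  ring

theorem det_step1 (a b c : ℕ) :
    Matrix.det (Matrix.of fun i j : Fin c =>
      u a b ((i : ℤ) - (j : ℤ)) + u a b ((i : ℤ) + (j : ℤ) + 1)) =
    Matrix.det (Matrix.of fun i j : Fin c => C (a+b+(2*j+1)) ((a:ℤ)+j-i)) := by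
  let U : Matrix (Fin c) (Fin c) ℚ := Matrix.of fun l j =>
    if (l:ℕ) ≤ j then ((2*(j:ℕ)+1).choose (j-l) : ℚ) else 0
  have hU : U.det = 1 := by
    rw [Matrix.det_of_isUpperTriangular]
    · simp [U]
    · intro i j hij
      have : ¬ ((i:ℕ) ≤ j) := by
        have : (j:ℕ) < i := hij
        omega
      simp only [U, Matrix.of_apply, if_neg this]
  rw [← mul_one (Matrix.det _), ← hU, ← Matrix.det_mul]
  congr 1
  ext i j
  rw [Matrix.mul_apply, Matrix.of_apply, ← col_sum]
  simp only [U, Matrix.of_apply]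
  rw [Fin.sum_univ_eq_sum_range (fun l : ℕ => (u a b ((i:ℤ) - l) + u a b ((i:ℤ) + l + 1)) *
    (if l ≤ (j:ℕ) then ((2*(j:ℕ)+1).choose (j-l) : ℚ) else 0)) c]
  symm
  rw [← Finset.sum_subset (Finset.range_mono (show (j:ℕ)+1 ≤ c from j.2))]
  · apply Finset.sum_congr rfl
    intro l hl
    rw [if_pos (by simpa [Nat.lt_succ_iff] using hl)]
  · intro l _ hl
    rw [if_neg (by simpa [Nat.lt_succ_iff] using hl), mul_zero]

open Polynomial in
theorem det_shift (c : ℕ) (p : Fin c → ℚ[X]) (hp : ∀ i, (p i).natDegree < c) (t : ℚ) (x : Fin c → ℚ) :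
    Matrix.det (Matrix.of fun i j : Fin c => (p i).eval (x j)) =
    Matrix.det (Matrix.of fun i j : Fin c => (p i).eval (x j + t)) := by
  have key : ∀ y : Fin c → ℚ, (Matrix.of fun i j : Fin c => (p i).eval (y j)) =
      (Matrix.of fun i k : Fin c => (p i).coeff k) * (Matrix.vandermonde y).transpose := by
    intro y
    ext i j
    rw [Matrix.mul_apply, Matrix.of_apply, eval_eq_sum_range' (hp i),
      ← Fin.sum_univ_eq_sum_range (fun k : ℕ => (p i).coeff k * y j ^ k) c]
    simp [Matrix.vandermonde_apply]
  rw [key x, key (fun j => x j + t), Matrix.det_mul, Matrix.det_mul, Matrix.det_transpose,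
    Matrix.det_transpose, Matrix.det_vandermonde_add]

open Polynomial in
noncomputable def pp (a b c i : ℕ) : ℚ[X] :=
  (descPochhammer ℚ i).comp (X + Polynomial.C (a:ℚ)) *
    (ascPochhammer ℚ (c-1-i)).comp (X + Polynomial.C ((b+2+i : ℕ):ℚ))

open Polynomial in
theorem pp_deg (a b c i : ℕ) (h : i < c) : (pp a b c i).natDegree < c := by
  unfold pp
  refine lt_of_le_of_lt natDegree_mul_le ?_
  rw [natDegree_comp, natDegree_comp, natDegree_X_add_C, natDegree_X_add_C,
    descPochhammer_natDegree, ascPochhammer_natDegree]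
  omega

open Polynomial in
theorem pp_eval_nat (a b c i j : ℕ) : (pp a b c i).eval (j:ℚ) =
    ((a+j).descFactorial i : ℚ) * ((b+2+i+j).ascFactorial (c-1-i) : ℚ) := by
  unfold pp
  simp only [eval_mul, eval_comp, eval_add, eval_X, eval_C]
  rw [show (j:ℚ)+a = ((a+j:ℕ):ℚ) by push_cast; ring,
    show (j:ℚ)+((b+2+i:ℕ):ℚ) = ((b+2+i+j:ℕ):ℚ) by push_cast; ring,
    descPochhammer_eval_eq_descFactorial, ascPochhammer_nat_eq_natCast_ascFactorial]

open Polynomial in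
theorem pp_eval_shift (a d c i m : ℕ) : (pp a (a+d) c i).eval ((m:ℚ) + (-a)) =
    (m.descFactorial i : ℚ) * ((d+2+i+m).ascFactorial (c-1-i) : ℚ) := by
  unfold pp
  simp only [eval_mul, eval_comp, eval_add, eval_X, eval_C]
  rw [show (m:ℚ)+ -a + a = (m:ℚ) by ring,
    show (m:ℚ)+ -a + ((a+d+2+i:ℕ):ℚ) = ((d+2+i+m:ℕ):ℚ) by push_cast; ring,
    descPochhammer_eval_eq_descFactorial, ascPochhammer_nat_eq_natCast_ascFactorial]

theorem det_pp (a d c : ℕ) :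
    Matrix.det (Matrix.of fun i j : Fin c => (pp a (a+d) c i).eval ((j:ℕ):ℚ)) =
    ∏ i ∈ Finset.range c, ((i.factorial : ℚ) * (d+i+c).factorial / (d+2*i+1).factorial) := by
  rw [det_shift c (fun i => pp a (a+d) c i) (fun i => pp_deg _ _ _ _ i.2) (-a)
    (fun j => ((j:ℕ):ℚ)), Matrix.det_of_isUpperTriangular]
  · rw [← Fin.prod_univ_eq_prod_range (fun i : ℕ =>
      ((i.factorial : ℚ) * (d+i+c).factorial / (d+2*i+1).factorial)) c]
    apply Finset.prod_congr rfl
    intro i _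
    simp only [Matrix.of_apply]
    rw [pp_eval_shift, Nat.descFactorial_self, mul_div_assoc]
    congr 1
    rw [eq_div_iff (by positivity)]
    have := Nat.factorial_mul_ascFactorial (d+2*i+1) (c-1-i)
    rw [show d+2+(i:ℕ)+i = d+2*i+1+1 by ring]
    rw [show d+2*(i:ℕ)+1+(c-1-i) = d+i+c by omega] at this
    rw [← this]; push_cast; ring
  · intro i j hij
    simp only [Matrix.of_apply]
    have : (j:ℕ) < i := hij
    rw [pp_eval_shift, Nat.descFactorial_of_lt this]; simp

theorem entry_eq_s6 (a b c i j : ℕ) (hi : i < c) :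
    C (a+b+(2*j+1)) ((a:ℤ)+j-i) =
    (((a+b+1+2*j).factorial : ℚ) / ((a+j).factorial * (b+c+j).factorial)) *
      (pp a b c i).eval (j:ℚ) := by
  rw [pp_eval_nat]
  unfold C
  by_cases h : i ≤ a + j
  · rw [if_pos (by omega), show ((a:ℤ)+j-i).toNat = a+j-i by omega,
      Nat.cast_choose ℚ (by omega), show a+b+(2*j+1) = a+b+1+2*j by ring,
      show a+b+1+2*j-(a+j-i) = b+1+i+j by omega]
    have h1 := Nat.factorial_mul_descFactorial h
    have h2 := Nat.factorial_mul_ascFactorial (b+1+i+j) (c-1-i)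
    rw [show b+1+i+j+(c-1-i) = b+c+j by omega, show b+1+i+j+1 = b+2+i+j by ring] at h2
    rw [← h1, ← h2]
    have h3 : (a+j).descFactorial i ≠ 0 := by
      rw [Ne, Nat.descFactorial_eq_zero_iff_lt]; omega
    have h4 : (b+2+i+j).ascFactorial (c-1-i) ≠ 0 := by
      intro h0; rw [h0, mul_zero] at h2; exact (Nat.factorial_ne_zero _ h2.symm)
    have h3' : ((a+j).descFactorial i : ℚ) ≠ 0 := by exact_mod_cast h3
    have h4' : ((b+2+i+j).ascFactorial (c-1-i) : ℚ) ≠ 0 := by exact_mod_cast h4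
    have h5 : ((a+j-i).factorial : ℚ) ≠ 0 := by positivity
    have h6 : ((b+1+i+j).factorial : ℚ) ≠ 0 := by positivity
    push_cast
    field_simp
  · rw [if_neg (by omega), Nat.descFactorial_of_lt (by omega)]; simp

theorem det_fact (a d c : ℕ) :
    Matrix.det (Matrix.of fun i j : Fin c =>
      u a (a+d) ((i : ℤ) - (j : ℤ)) + u a (a+d) ((i : ℤ) + (j : ℤ) + 1)) =
    (∏ j ∈ Finset.range c, (((a+(a+d)+1+2*j).factorial : ℚ) /
      ((a+j).factorial * ((a+d)+c+j).factorial))) *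
    ∏ i ∈ Finset.range c, ((i.factorial : ℚ) * (d+i+c).factorial / (d+2*i+1).factorial) := by
  rw [det_step1, ← det_pp a d c, ← Fin.prod_univ_eq_prod_range (fun j : ℕ =>
    (((a+(a+d)+1+2*j).factorial : ℚ) / ((a+j).factorial * ((a+d)+c+j).factorial))) c,
    ← Matrix.det_mul_row]
  congr 1
  ext i j
  simp only [Matrix.of_apply]
  exact entry_eq_s6 _ _ _ _ _ i.2

/-- Shifted products of factorials. -/
theorem fact_shift (e c : ℕ) :
    (∏ j ∈ Finset.range (c+1), ((e+(c+1)+j).factorial : ℚ)) * (e+c).factorial =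
    (∏ j ∈ Finset.range c, ((e+c+j).factorial : ℚ)) *
      ((e+2*c).factorial * (e+2*c+1).factorial) := by
  have h := Finset.prod_range_succ' (fun j : ℕ => ((e+c+j).factorial : ℚ)) (c+1)
  rw [Finset.prod_range_succ, Finset.prod_range_succ] at h
  simp only [add_zero] at h
  rw [show e+c+(c+1) = e+2*c+1 by ring, show e+c+c = e+2*c by ring] at h
  rw [← mul_assoc, h]
  congr 1
  apply Finset.prod_congr rfl
  intro j _
  congr 2; ring

theorem row_prod (a d c : ℕ) :
    ∏ j ∈ Finset.Icc 1 a, ((((a+d:ℕ) : ℚ) + (c+1:ℕ) - j) * (((a+d:ℕ) : ℚ) + 2 * (c+1:ℕ) + j - 1)) /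
      (((((a+d:ℕ) : ℚ) + 2 * (c+1:ℕ) - j - 1)) * (((c+1:ℕ) : ℚ) + j - 1)) =
    ((2*a+d+1+2*c).factorial * c.factorial * (d+2*c).factorial * (a+d+c).factorial : ℚ) /
    ((a+c).factorial * (d+c).factorial * (a+d+2*c).factorial * (a+d+2*c+1).factorial) := by
  have key : ∀ n b : ℕ, n ≤ b → ∏ j ∈ Finset.Icc 1 n, (((b : ℚ) + (c+1:ℕ) - j) * ((b : ℚ) + 2 * (c+1:ℕ) + j - 1)) /
      ((((b : ℚ) + 2 * (c+1:ℕ) - j - 1)) * (((c+1:ℕ) : ℚ) + j - 1)) =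
    ((n+b+1+2*c).factorial * c.factorial * (b-n+2*c).factorial * (b+c).factorial : ℚ) /
    ((n+c).factorial * (b-n+c).factorial * (b+2*c).factorial * (b+2*c+1).factorial) := by
    intro n b
    induction n with
    | zero =>
      intro _
      simp only [zero_add, Finset.Icc_eq_empty_of_lt zero_lt_one, Finset.prod_empty, Nat.sub_zero]
      rw [show b+1+2*c = b+2*c+1 by ring]
      field_simp
    | succ n ih =>
      intro hn
      rw [Finset.prod_Icc_succ_top (by omega), ih (by omega)]
      obtain ⟨e, rfl⟩ := Nat.exists_eq_add_of_le hn
      rw [show n+1+e-n = e+1 by omega, show n+1+e-(n+1) = e by omega,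
        show n+1+(n+1+e)+1+2*c = (n+(n+1+e)+1+2*c)+1 by ring,
        show e+1+2*c = (e+2*c)+1 by ring, show e+1+c = (e+c)+1 by ring,
        show n+1+c = (n+c)+1 by ring, Nat.factorial_succ (n+(n+1+e)+1+2*c),
        Nat.factorial_succ (e+2*c), Nat.factorial_succ (e+c), Nat.factorial_succ (n+c)]
      push_cast
      have h1 : (n:ℚ)+1+e+2*(c+1)-(n+1)-1 = e+2*c+1 := by ring
      have h2 : (c:ℚ)+1+(n+1)-1 = n+c+1 := by ring
      have h3 : (n:ℚ)+1+e+(c+1)-(n+1) = e+c+1 := by ring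
      have h4 : (n:ℚ)+1+e+2*(c+1)+(n+1)-1 = n+(n+1+e)+1+2*c+1 := by ring
      rw [h1, h2, h3, h4]
      have : ((n:ℚ)+c+1) ≠ 0 := by positivity
      have : ((e:ℚ)+c+1) ≠ 0 := by positivity
      have : ((e:ℚ)+2*c+1) ≠ 0 := by positivity
      field_simp
  rw [key a (a+d) (by omega)]
  rw [show a+d-a = d by omega, show a+(a+d)+1+2*c = 2*a+d+1+2*c by ring]

theorem prod_final (a d c : ℕ) :
    (∏ j ∈ Finset.range c, (((a+(a+d)+1+2*j).factorial : ℚ) /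
      ((a+j).factorial * ((a+d)+c+j).factorial))) *
    ∏ i ∈ Finset.range c, ((i.factorial : ℚ) * (d+i+c).factorial / (d+2*i+1).factorial) =
    ∏ i ∈ Finset.Icc 1 c, ∏ j ∈ Finset.Icc 1 a,
      ((((a+d:ℕ) : ℚ) + i - j) * (((a+d:ℕ) : ℚ) + 2 * i + j - 1)) /
      (((((a+d:ℕ) : ℚ) + 2 * i - j - 1)) * ((i : ℚ) + j - 1)) := by
  induction c with
  | zero => simp
  | succ c ih =>
    rw [Finset.prod_Icc_succ_top (by omega), ← ih, row_prod]
    have f1 := fact_shift (a+d) c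
    have f2 := fact_shift d c
    have r : ∀ n : ℕ, ∏ i ∈ Finset.range n, ((d+i+n).factorial : ℚ) =
        ∏ i ∈ Finset.range n, ((d+n+i).factorial : ℚ) := by
      intro n; apply Finset.prod_congr rfl; intro i _; congr 2; ring
    simp only [Finset.prod_div_distrib, Finset.prod_mul_distrib, r]
    rw [← eq_div_iff (by positivity)] at f1 f2
    rw [f1, f2]
    simp only [Finset.prod_range_succ]
    have p0 : ∀ (n : ℕ) (f : ℕ → ℕ), ∏ i ∈ Finset.range n, ((f i).factorial : ℚ) ≠ 0 := by
      intro n f; exact Finset.prod_ne_zero_iff.mpr fun i _ => by positivity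
    have q1 := p0 c (fun j => a+j)
    have q2 := p0 c (fun j => a+d+c+j)
    have q3 := p0 c (fun j => d+2*j+1)
    rw [show a+(a+d)+1+2*c = 2*a+d+1+2*c by ring]
    field_simp

theorem det_toeplitz_plus_hankel (a b c : ℕ)
    (h : ∀ i j : ℤ, 1 ≤ i → i ≤ c → 1 ≤ j → j ≤ a → (b : ℤ) + 2 * i - j - 1 ≠ 0) :
    Matrix.det (Matrix.of fun i j : Fin c =>
      u a b ((i : ℤ) - (j : ℤ)) + u a b ((i : ℤ) + (j : ℤ) + 1)) =
    ∏ i ∈ Finset.Icc 1 c, ∏ j ∈ Finset.Icc 1 a,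
      (((b : ℚ) + i - j) * ((b : ℚ) + 2 * i + j - 1)) /
      ((((b : ℚ) + 2 * i - j - 1)) * ((i : ℚ) + j - 1)) := by
  rcases Nat.eq_zero_or_pos c with rfl | hc
  · simp
  have hab : a ≤ b := by
    by_contra hlt
    exact h 1 (b+1) (by omega) (by omega) (by omega) (by omega) (by ring)
  obtain ⟨d, rfl⟩ := Nat.exists_eq_add_of_le hab
  rw [det_fact, prod_final]
end

section
/- Let a, b, c be natural numbers. Then the determinant of the c×c rational matrix whose (i,j)-entry (for 0 ≤ i, j ≤ c-1) is the binomial coefficient C(i+j+a+b, i+a) equals ∏_{i=0}^{a-1} ∏_{j=0}^{b-1} ∏_{k=0}^{c-1} (i+j+k+2) / (i+j+k+1). -/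
theorem hankel_factorial_det (s c : ℕ) :
    Matrix.det (Matrix.of fun i j : Fin c => ((((i : ℕ) + s + (j : ℕ)).factorial : ℕ) : ℚ)) =
    ∏ k ∈ Finset.range c, (((k + s).factorial : ℚ) * (k.factorial : ℚ)) := by
  have h1 : (Matrix.of fun i j : Fin c => ((((i : ℕ) + s + (j : ℕ)).factorial : ℕ) : ℚ)) =
      Matrix.of fun i j : Fin c => ((((i : ℕ) + s).factorial : ℕ) : ℚ) *
        (Matrix.of fun i j : Fin c =>
          (ascPochhammer ℚ (j : ℕ)).eval (((i : ℕ) : ℚ) + ((s : ℚ) + 1))) i j := by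
    ext i j
    have e : ((i : ℕ) : ℚ) + ((s : ℚ) + 1) = (((i : ℕ) + s + 1 : ℕ) : ℚ) := by push_cast; ring
    simp only [Matrix.of_apply]
    rw [e, ← ascPochhammer_eval_cast, ascPochhammer_nat_eq_ascFactorial]
    exact_mod_cast (Nat.factorial_mul_ascFactorial ((i : ℕ) + s) j).symm
  rw [h1, Matrix.det_mul_column, Finset.prod_mul_distrib,
    Finset.prod_range (fun k => ((k + s).factorial : ℚ))]
  congr 1
  have h2 := Matrix.det_eval_matrixOfPolynomials_eq_det_vandermonde
    (fun i : Fin c => ((i : ℕ) : ℚ) + ((s : ℚ) + 1)) (fun j : Fin c => ascPochhammer ℚ (j : ℕ))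
    (fun j => ascPochhammer_natDegree ℚ _) (fun j => monic_ascPochhammer ℚ _)
  rw [← h2, Matrix.det_vandermonde_add]
  cases c with
  | zero => simp
  | succ n =>
    rw [Matrix.det_vandermonde_id_eq_superFactorial, ← Nat.prod_range_succ_factorial]
    push_cast
    rfl

theorem prod_box_row (a b k : ℕ) :
    ∏ i ∈ Finset.range a, ∏ j ∈ Finset.range b,
      ((i : ℚ) + j + k + 2) / ((i : ℚ) + j + k + 1) =
    ((k + (a + b)).factorial : ℚ) * (k.factorial : ℚ) /
      (((k + a).factorial : ℚ) * ((k + b).factorial : ℚ)) := by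
  have h1 : ∀ i : ℕ, ∏ j ∈ Finset.range b, ((i : ℚ) + j + k + 2) / ((i : ℚ) + j + k + 1) =
      ((i : ℚ) + b + k + 1) / ((i : ℚ) + k + 1) := by
    intro i
    induction b with
    | zero =>
      have : (i : ℚ) + k + 1 ≠ 0 := by positivity
      simp [this]
    | succ b ih =>
      rw [Finset.prod_range_succ, ih]
      have : (i : ℚ) + k + 1 ≠ 0 := by positivity
      have : (i : ℚ) + b + k + 1 ≠ 0 := by positivity
      push_cast
      field_simp
      ring
  simp only [h1]
  have hf : ∀ n : ℕ, (n.factorial : ℚ) ≠ 0 := fun n => by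
    exact_mod_cast Nat.factorial_ne_zero n
  induction a with
  | zero =>
    have := hf k
    have := hf (k + b)
    simp
    field_simp
  | succ a ih =>
    rw [Finset.prod_range_succ, ih]
    have e1 : k + (a + 1 + b) = (k + (a + b)) + 1 := by ring
    have e2 : k + (a + 1) = (k + a) + 1 := by ring
    rw [e1, e2, Nat.factorial_succ, Nat.factorial_succ]
    have := hf (k + a)
    have := hf (k + b)
    have : (a : ℚ) + k + 1 ≠ 0 := by positivity
    have : (k : ℚ) + a + 1 ≠ 0 := by positivity
    push_cast
    field_simp
    ring

theorem det_binomial_symmetric (a b c : ℕ) :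
    Matrix.det (Matrix.of fun i j : Fin c =>
      ((Nat.choose ((i : ℕ) + (j : ℕ) + a + b) ((i : ℕ) + a) : ℚ))) =
    ∏ i ∈ Finset.range a, ∏ j ∈ Finset.range b, ∏ k ∈ Finset.range c,
      ((i : ℚ) + j + k + 2) / ((i : ℚ) + j + k + 1) := by
  have hf : ∀ n : ℕ, (n.factorial : ℚ) ≠ 0 := fun n => by
    exact_mod_cast Nat.factorial_ne_zero n
  have hR : ∏ i ∈ Finset.range a, ∏ j ∈ Finset.range b, ∏ k ∈ Finset.range c,
      ((i : ℚ) + j + k + 2) / ((i : ℚ) + j + k + 1) =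
      ∏ k ∈ Finset.range c, ∏ i ∈ Finset.range a, ∏ j ∈ Finset.range b,
      ((i : ℚ) + j + k + 2) / ((i : ℚ) + j + k + 1) := by
    conv_rhs => rw [Finset.prod_comm]
    refine Finset.prod_congr rfl fun i _ => ?_
    exact Finset.prod_comm
  have h1 : (Matrix.of fun i j : Fin c =>
      ((Nat.choose ((i : ℕ) + (j : ℕ) + a + b) ((i : ℕ) + a) : ℚ))) =
      Matrix.of fun i j : Fin c => ((((i : ℕ) + a).factorial : ℕ) : ℚ)⁻¹ *
        (Matrix.of fun i j : Fin c => ((((j : ℕ) + b).factorial : ℕ) : ℚ)⁻¹ *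
          (Matrix.of fun i j : Fin c =>
            ((((i : ℕ) + (a + b) + (j : ℕ)).factorial : ℕ) : ℚ)) i j) i j := by
    ext i j
    simp only [Matrix.of_apply]
    have e : (i : ℕ) + (j : ℕ) + a + b = ((i : ℕ) + a) + ((j : ℕ) + b) := by ring
    have e' : (i : ℕ) + (a + b) + (j : ℕ) = ((i : ℕ) + a) + ((j : ℕ) + b) := by ring
    rw [e, e', Nat.cast_add_choose]
    have := hf (i + a)
    have := hf (j + b)
    field_simp
  rw [hR, h1, Matrix.det_mul_column, Matrix.det_mul_row, hankel_factorial_det]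
  simp only [prod_box_row]
  rw [← Finset.prod_range (fun k => ((k + a).factorial : ℚ)⁻¹),
    ← Finset.prod_range (fun k => ((k + b).factorial : ℚ)⁻¹),
    ← Finset.prod_mul_distrib, ← Finset.prod_mul_distrib]
  refine Finset.prod_congr rfl fun k _ => ?_
  have := hf (k + a)
  have := hf (k + b)
  field_simp
end

section
/- For natural numbers i, j define the super Catalan number S_{i,j} = (2i)!·(2j)! / (2·i!·j!·(i+j)!) as an element of ℚ. Let a, b, n be natural numbers. Then the determinant of the n×n rational matrix whose (i,j)-entry (for 1 ≤ i, j ≤ n) is S_{i+a, j+b} equals ((−1)^{n(n−1)/2} / (2^n · n!)) · ∏_{i=1}^{n} ((2a+2i)!·(2b+2i)!·i!) / ((a+i)!·(b+i)!·(a+b+n+i)!). -/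
/-- The super Catalan numbers `S i j = (2i)!(2j)! / (2 i! j! (i+j)!)` as rationals. -/
def S (i j : ℕ) : ℚ :=
  ((2 * i).factorial * (2 * j).factorial : ℚ) /
    (2 * i.factorial * j.factorial * (i + j).factorial)

theorem sign_revPerm_aux (n : ℕ) :
    ((Equiv.Perm.sign (Fin.revPerm : Equiv.Perm (Fin n)) : ℤ) : ℚ) = (-1) ^ (n * (n - 1) / 2) := by
  rw [Equiv.Perm.sign_eq_prod_prod_Iio]
  have h : ∀ j : Fin n, (∏ i ∈ Finset.Iio j,
      (if (Fin.revPerm i : Fin n) < Fin.revPerm j then (1 : ℤˣ) else -1)) = (-1) ^ (j : ℕ) := by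
    intro j
    rw [Finset.prod_congr rfl (g := fun _ => (-1 : ℤˣ))]
    · simp
    · intro i hi
      have hi' := Finset.mem_Iio.mp hi
      rw [if_neg]
      simp only [Fin.revPerm_apply, Fin.rev_lt_rev]
      exact not_lt.mpr hi'.le
  rw [Finset.prod_congr rfl (fun j _ => h j), Finset.prod_pow_eq_pow_sum,
    Fin.sum_univ_eq_sum_range (fun i => i), Finset.sum_range_id]
  simp

theorem det_core (c n : ℕ) :
    Matrix.det (Matrix.of fun i j : Fin (n + 1) =>
      (Polynomial.eval (((i : ℕ) : ℚ) + c) (descPochhammer ℚ (j : ℕ)))) = n.superFactorial := by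
  have h := Matrix.det_eval_matrixOfPolynomials_eq_det_vandermonde
    (fun i : Fin (n + 1) => ((i : ℕ) : ℚ) + c)
    (fun i => descPochhammer ℚ i)
    (fun i => descPochhammer_natDegree ℚ i)
    (fun i => monic_descPochhammer ℚ i)
  rw [← h, Matrix.det_vandermonde_add]
  exact Matrix.det_vandermonde_id_eq_superFactorial n

theorem entry_aux (a b n : ℕ) (i j : Fin (n + 1)) :
    S ((i : ℕ) + 1 + a) ((j : ℕ) + 1 + b) =
    (((2 * (a + (i + 1))).factorial : ℚ) /
      (2 * (a + (i + 1)).factorial * (a + b + (n + 1) + (i + 1)).factorial)) *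
    ((((2 * (b + (j + 1))).factorial : ℚ) / (b + (j + 1)).factorial) *
      Polynomial.eval (((i : ℕ) : ℚ) + ((a + b + n + 2 : ℕ) : ℚ))
        (descPochhammer ℚ ((Fin.revPerm j : Fin (n + 1)) : ℕ))) := by
  have hj : (j : ℕ) ≤ n := Nat.lt_succ_iff.mp j.2
  have hr : ((Fin.revPerm j : Fin (n + 1)) : ℕ) = n - j := by
    simp [Fin.val_rev]
  rw [hr, ← Nat.cast_add, descPochhammer_eval_eq_descFactorial]
  have hd := Nat.factorial_mul_descFactorial (n := (i : ℕ) + (a + b + n + 2)) (k := n - j) (by omega)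
  rw [show (i : ℕ) + (a + b + n + 2) - (n - j) = (i : ℕ) + 1 + a + (j + 1 + b) by omega] at hd
  rw [show a + b + (n + 1) + ((i : ℕ) + 1) = i + (a + b + n + 2) by omega, ← hd,
    show a + ((i : ℕ) + 1) = i + 1 + a by omega, show b + ((j : ℕ) + 1) = j + 1 + b by omega]
  have hne : ((i + (a + b + n + 2) : ℕ).descFactorial (n - j) : ℚ) ≠ 0 := by
    have := (Nat.descFactorial_eq_zero_iff_lt (n := (i : ℕ) + (a + b + n + 2)) (k := n - j)).not.mpr
      (by omega)
    exact_mod_cast this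
  have h1 := Nat.factorial_ne_zero ((i : ℕ) + 1 + a)
  have h2 := Nat.factorial_ne_zero ((j : ℕ) + 1 + b)
  have h3 := Nat.factorial_ne_zero ((i : ℕ) + 1 + a + (j + 1 + b))
  rw [← Nat.cast_ne_zero (R := ℚ)] at h1 h2 h3
  unfold S
  rw [Nat.cast_mul]
  generalize (((i + (a + b + n + 2) : ℕ).descFactorial (n - j) : ℕ) : ℚ) = D at *
  generalize (((i : ℕ) + 1 + a + (j + 1 + b)).factorial : ℚ) = F at *
  field_simp

theorem det_superCatalan (a b n : ℕ) :
    Matrix.det (Matrix.of fun i j : Fin n =>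
      S ((i : ℕ) + 1 + a) ((j : ℕ) + 1 + b)) =
    ((-1 : ℚ) ^ (n * (n - 1) / 2) / (2 ^ n * n.factorial)) *
      ∏ i ∈ Finset.Icc 1 n,
        (((2 * a + 2 * i).factorial * (2 * b + 2 * i).factorial * i.factorial : ℚ)) /
        (((a + i).factorial * (b + i).factorial * (a + b + n + i).factorial : ℚ)) := by
  cases n with
  | zero => simp
  | succ n =>
    simp_rw [entry_aux]
    have h1 := Matrix.det_mul_column (fun i : Fin (n + 1) =>
      (((2 * (a + (i + 1))).factorial : ℚ) /
      (2 * (a + (i + 1)).factorial * (a + b + (n + 1) + (i + 1)).factorial)))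
      (Matrix.of fun i j : Fin (n + 1) =>
        ((((2 * (b + (j + 1))).factorial : ℚ) / (b + (j + 1)).factorial) *
      Polynomial.eval (((i : ℕ) : ℚ) + ((a + b + n + 2 : ℕ) : ℚ))
        (descPochhammer ℚ ((Fin.revPerm j : Fin (n + 1)) : ℕ))))
    have h2 := Matrix.det_mul_row (fun j : Fin (n + 1) =>
      (((2 * (b + (j + 1))).factorial : ℚ) / (b + (j + 1)).factorial))
      (Matrix.of fun i j : Fin (n + 1) =>
      Polynomial.eval (((i : ℕ) : ℚ) + ((a + b + n + 2 : ℕ) : ℚ))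
        (descPochhammer ℚ ((Fin.revPerm j : Fin (n + 1)) : ℕ)))
    have h3 := Matrix.det_permute' (Fin.revPerm : Equiv.Perm (Fin (n + 1)))
      (Matrix.of fun i j : Fin (n + 1) =>
      (Polynomial.eval (((i : ℕ) : ℚ) + ((a + b + n + 2 : ℕ) : ℚ)) (descPochhammer ℚ (j : ℕ))))
    rw [sign_revPerm_aux, det_core] at h3
    refine h1.trans ?_
    refine (congrArg _ (h2.trans (congrArg _ h3))).trans ?_
    rw [Fin.prod_univ_eq_prod_range (fun i => (((2 * (a + (i + 1))).factorial : ℚ) /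
      (2 * (a + (i + 1)).factorial * (a + b + (n + 1) + (i + 1)).factorial))) (n + 1),
      Fin.prod_univ_eq_prod_range (fun j =>
      (((2 * (b + (j + 1))).factorial : ℚ) / (b + (j + 1)).factorial)) (n + 1)]
    have hI : ∀ f : ℕ → ℚ, ∏ i ∈ Finset.Icc 1 (n + 1), f i
        = ∏ i ∈ Finset.range (n + 1), f (i + 1) := by
      intro f
      rw [Finset.range_eq_Ico, Finset.prod_Ico_add' f 0 (n + 1) 1]
      rfl
    have hsf : (∏ i ∈ Finset.range (n + 1), ((i + 1).factorial : ℚ))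
        = (n + 1).factorial * n.superFactorial := by
      rw [← Nat.cast_prod, Nat.prod_range_factorial_succ, Nat.superFactorial_succ, Nat.cast_mul]
    rw [hI]
    simp only [Finset.prod_div_distrib, Finset.prod_mul_distrib, hsf, Finset.prod_const,
      Finset.card_range, ← mul_add]
    have hn : ((n + 1).factorial : ℚ) ≠ 0 := by exact_mod_cast Nat.factorial_ne_zero _
    field_simp
end

section
/- Let a, b be natural numbers and let c ≥ 1 be a natural number. Consider the polynomial P in ℚ[t_0, …, t_{c-1}] given by P = ∏_{i=0}^{c-1} (1+t_i)^{a+b} · ∏_{0 ≤ i < j ≤ c-1} (t_i − t_j)^2. Then the coefficient in P of the monomial ∏_{i=0}^{c-1} t_i^{b+c-1} equals (−1)^{c(c−1)/2} · ∏_{ℓ=0}^{c-1} ((a+b+ℓ)!·(ℓ+1)!) / ((a+ℓ)!·(b+ℓ)!). -/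
open MvPolynomial

lemma coeff_prod_aeval {n : ℕ} (g : Fin n → Polynomial ℚ) (m : Fin n →₀ ℕ) :
    coeff m (∏ i, Polynomial.aeval (X i : MvPolynomial (Fin n) ℚ) (g i)) =
      ∏ i, (g i).coeff (m i) := by
  have h1 : ∀ i, Polynomial.aeval (X i : MvPolynomial (Fin n) ℚ) (g i) =
      ∑ k ∈ Finset.range ((g i).natDegree + 1), C ((g i).coeff k) * X i ^ k := by
    intro i
    rw [Polynomial.aeval_eq_sum_range]
    simp [MvPolynomial.smul_eq_C_mul]
  simp only [h1]
  rw [Finset.prod_univ_sum, coeff_sum]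
  have h2 : ∀ p : Fin n → ℕ, coeff m (∏ i, (C ((g i).coeff (p i)) * X i ^ (p i) :
      MvPolynomial (Fin n) ℚ)) = if p = m then ∏ i, (g i).coeff (m i) else 0 := by
    intro p
    have : (∏ i, (C ((g i).coeff (p i)) * X i ^ (p i) : MvPolynomial (Fin n) ℚ)) =
        monomial (Finsupp.equivFunOnFinite.symm p) (∏ i, (g i).coeff (p i)) := by
      rw [monomial_eq, Finset.prod_mul_distrib, map_prod, Finsupp.prod_fintype _ _ (by simp)]
      simp
    rw [this, coeff_monomial]
    by_cases hp : p = m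
    · subst hp
      simp
    · rw [if_neg hp, if_neg]
      rintro rfl
      exact hp (by simp)
  simp only [h2]
  rw [Finset.sum_ite_eq']
  split_ifs with h
  · rfl
  · rw [Fintype.mem_piFinset] at h
    push Not at h
    obtain ⟨i, hi⟩ := h
    symm
    apply Finset.prod_eq_zero (Finset.mem_univ i)
    apply Polynomial.coeff_eq_zero_of_natDegree_lt
    simpa using hi

lemma coeff_det_aeval {n : ℕ} (g : Fin n → Fin n → Polynomial ℚ) (k : ℕ)
    (σ : Equiv.Perm (Fin n)) :
    coeff (Finsupp.equivFunOnFinite.symm fun _ : Fin n => k)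
      (Matrix.det (Matrix.of fun i j =>
        Polynomial.aeval (X (σ i) : MvPolynomial (Fin n) ℚ) (g i j))) =
      Matrix.det (Matrix.of fun i j => (g i j).coeff k) := by
  rw [Matrix.det_apply', Matrix.det_apply', coeff_sum]
  refine Finset.sum_congr rfl fun τ _ => ?_
  have : (((Equiv.Perm.sign τ : ℤ) : MvPolynomial (Fin n) ℚ)) =
      C (((Equiv.Perm.sign τ : ℤ) : ℚ)) := by simp
  rw [this, coeff_C_mul]
  congr 1
  simp only [Matrix.of_apply]
  have e : (∏ x, Polynomial.aeval (X (σ (τ x)) : MvPolynomial (Fin n) ℚ) (g (τ x) x)) =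
      ∏ y, Polynomial.aeval (X y : MvPolynomial (Fin n) ℚ)
        (g (τ ((τ.trans σ).symm y)) ((τ.trans σ).symm y)) := by
    symm
    rw [← Equiv.prod_comp (τ.trans σ)]
    simp
  rw [e, coeff_prod_aeval, ← Equiv.prod_comp (τ.trans σ)]
  simp

lemma det_mul_det_expand {n : ℕ} {R : Type*} [CommRing R] (A B : Matrix (Fin n) (Fin n) R) :
    A.det * B.det = ∑ σ : Equiv.Perm (Fin n),
      Matrix.det (Matrix.of fun i j => A (σ i) i * B (σ i) j) := by
  rw [Matrix.det_apply' A, Finset.sum_mul]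
  refine Finset.sum_congr rfl fun σ _ => ?_
  have := Matrix.det_mul_column (fun i => A (σ i) i) (B.submatrix σ id)
  simp only [Matrix.submatrix_apply, id] at this
  rw [this, Matrix.det_permute]
  ring

lemma det_choose (a b c : ℕ) :
    Matrix.det (Matrix.of fun i j : Fin c => (((a + b + j).choose (b + i) : ℕ) : ℚ)) =
      ∏ l ∈ Finset.range c, (((a + b + l).factorial * l.factorial : ℚ)) /
        (((a + l).factorial * (b + l).factorial : ℚ)) := by
  have hent : (Matrix.of fun i j : Fin c => (((a + b + j).choose (b + i) : ℕ) : ℚ)) =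
      Matrix.of fun i j : Fin c => (1 / ((b + i).factorial : ℚ)) *
        (Matrix.of fun i j : Fin c => (((a + b + j).factorial : ℚ) / (a + j).factorial) *
          ((a + j).descFactorial i : ℚ)) i j := by
    ext i j
    simp only [Matrix.of_apply]
    by_cases h : (i : ℕ) ≤ a + j
    · rw [Nat.cast_choose ℚ (by omega), ← Nat.factorial_mul_descFactorial h,
        show a + b + (j : ℕ) - (b + i) = a + j - i by omega]
      have := Nat.factorial_ne_zero (a + j - i)
      have := Nat.factorial_ne_zero (b + i)
      have : (a + (j : ℕ)).descFactorial i ≠ 0 := by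
        rw [Ne, Nat.descFactorial_eq_zero_iff_lt]; omega
      push_cast
      field_simp
    · rw [Nat.choose_eq_zero_of_lt (by omega), Nat.descFactorial_of_lt (by omega)]
      simp
  have hdet : Matrix.det (Matrix.of fun i j : Fin c => ((a + j).descFactorial i : ℚ)) =
      ∏ l ∈ Finset.range c, (l.factorial : ℚ) := by
    rw [← Matrix.det_transpose]
    have h := Matrix.det_eval_matrixOfPolynomials_eq_det_vandermonde
      (fun j : Fin c => ((a + j : ℕ) : ℚ)) (fun i => descPochhammer ℚ i)
      (fun i => descPochhammer_natDegree _ _) (fun i => monic_descPochhammer _ _)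
    have h' : (Matrix.of fun i j : Fin c => ((a + j).descFactorial i : ℚ)).transpose =
        Matrix.of fun i j : Fin c => Polynomial.eval ((a + i : ℕ) : ℚ) (descPochhammer ℚ j) := by
      ext i j
      simp only [Matrix.transpose_apply, Matrix.of_apply]
      rw [descPochhammer_eval_eq_descFactorial]
    rw [h', ← h]
    have h3 : (fun j : Fin c => ((a + j : ℕ) : ℚ)) = fun j : Fin c => ((j : ℕ) : ℚ) + a := by
      ext j; push_cast; ring
    rw [h3, Matrix.det_vandermonde_add]
    cases c with
    | zero => simp
    | succ n =>
      rw [Matrix.det_vandermonde_id_eq_superFactorial, Finset.prod_range_succ',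
        ← Nat.prod_range_factorial_succ, Nat.cast_prod, Nat.factorial_zero, Nat.cast_one, mul_one]
  have hrow := Matrix.det_mul_row
    (fun j : Fin c => (((a + b + j).factorial : ℚ) / (a + j).factorial))
    (Matrix.of fun i j : Fin c => ((a + j).descFactorial i : ℚ))
  simp only [Matrix.of_apply] at hrow
  rw [hent, Matrix.det_mul_column, hrow, hdet, ← Finset.prod_range
    (fun l => (1 / ((b + l).factorial : ℚ))),
    ← Finset.prod_range (fun l => (((a + b + l).factorial : ℚ) / (a + l).factorial)),
    ← Finset.prod_mul_distrib, ← Finset.prod_mul_distrib]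
  refine Finset.prod_congr rfl fun l _ => ?_
  have := Nat.factorial_ne_zero (a + l)
  have := Nat.factorial_ne_zero (b + l)
  field_simp

lemma prod_neg_Ioi {R : Type*} [CommRing R] (c : ℕ) :
    (∏ i : Fin c, ∏ _j ∈ Finset.Ioi i, (-1 : R)) = (-1) ^ (c * (c - 1) / 2) := by
  simp only [Finset.prod_const, Fin.card_Ioi]
  rw [Finset.prod_pow_eq_pow_sum, ← Finset.sum_range (fun i => c - 1 - i),
    Finset.sum_range_reflect (fun i => i), Finset.sum_range_id]

lemma sq_vandermonde {R : Type*} [CommRing R] (c : ℕ) (v : Fin c → R) :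
    (∏ i : Fin c, ∏ j ∈ Finset.Ioi i, (v i - v j) ^ 2) = (-1) ^ (c * (c - 1) / 2) *
      ((Matrix.projVandermonde 1 v).det * (Matrix.vandermonde fun i => 1 + v i).det) := by
  rw [← prod_neg_Ioi, Matrix.det_projVandermonde, Matrix.det_vandermonde]
  simp only [← Finset.prod_mul_distrib]
  refine Finset.prod_congr rfl fun i _ => Finset.prod_congr rfl fun j _ => ?_
  simp only [Pi.one_apply]
  ring

theorem morris_m_eq_one (a b c : ℕ) (hc : 1 ≤ c) :
    MvPolynomial.coeff
      (Finsupp.equivFunOnFinite.symm fun _ : Fin c => b + c - 1)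
      ((∏ i : Fin c, (1 + X i) ^ (a + b)) *
        ∏ i : Fin c, ∏ j ∈ Finset.Ioi i, (X i - X j) ^ 2 : MvPolynomial (Fin c) ℚ) =
    (-1 : ℚ) ^ (c * (c - 1) / 2) *
      ∏ l ∈ Finset.range c,
        (((a + b + l).factorial * (l + 1).factorial : ℚ)) /
        (((a + l).factorial * (b + l).factorial : ℚ)) := by
  have key : ((∏ i : Fin c, (1 + X i) ^ (a + b)) *
        ∏ i : Fin c, ∏ j ∈ Finset.Ioi i, (X i - X j) ^ 2 : MvPolynomial (Fin c) ℚ) =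
      C ((-1 : ℚ) ^ (c * (c - 1) / 2)) * ∑ σ : Equiv.Perm (Fin c),
        Matrix.det (Matrix.of fun i j =>
          Polynomial.aeval (X (σ i) : MvPolynomial (Fin c) ℚ)
            ((Polynomial.X ^ (i.rev : ℕ) * (1 + Polynomial.X) ^ (a + b + j) :
              Polynomial ℚ))) := by
    rw [sq_vandermonde, det_mul_det_expand, map_pow, map_neg, map_one, mul_left_comm,
      Finset.mul_sum]
    congr 1
    refine Finset.sum_congr rfl fun σ _ => ?_
    rw [← Equiv.prod_comp σ, ← Matrix.det_mul_column]
    congr 1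
    ext1 i j
    simp only [Matrix.of_apply, Matrix.projVandermonde_apply, Matrix.vandermonde_apply,
      Pi.one_apply, map_mul, map_pow, map_add, map_one, Polynomial.aeval_X]
    ring
  rw [key, coeff_C_mul, coeff_sum]
  congr 1
  simp only [coeff_det_aeval]
  have hco : ∀ i j : Fin c, (Polynomial.X ^ (i.rev : ℕ) * (1 + Polynomial.X) ^ (a + b + j) :
      Polynomial ℚ).coeff (b + c - 1) = (((a + b + j).choose (b + i) : ℕ) : ℚ) := by
    intro i j
    have hi := i.isLt
    rw [show b + c - 1 = (b + i) + (i.rev : ℕ) by rw [Fin.val_rev]; omega,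
      Polynomial.coeff_X_pow_mul, Polynomial.coeff_one_add_X_pow]
  simp only [hco]
  rw [det_choose, Finset.sum_const, Finset.card_univ, Fintype.card_perm, Fintype.card_fin,
    nsmul_eq_mul]
  have hf : ((c.factorial : ℕ) : ℚ) = ∏ l ∈ Finset.range c, ((l + 1 : ℕ) : ℚ) := by
    rw [← Finset.prod_range_add_one_eq_factorial]; push_cast; rfl
  rw [hf, ← Finset.prod_mul_distrib]
  refine Finset.prod_congr rfl fun l _ => ?_
  rw [Nat.factorial_succ]
  push_cast
  ring
end

section
/- Let α, β, n be natural numbers. Consider the polynomial P in ℚ[t_1, …, t_n] given by P = ∏_{i=1}^{n} (1−t_i)^{2α} (1−t_i^2)^{2β} · ∏_{1 ≤ i < j ≤ n} (t_i − t_j)^2 (1 − t_i t_j)^2. Then the coefficient in P of the monomial ∏_{i=1}^{n} t_i^{α+2β+2n−2} equals (−1)^{n(α+β)} · ∏_{i=1}^{n} ((2β+2i−2)!·(2α+2β+2i−2)!·i!) / ((β+i−1)!·(α+β+i−1)!·(α+2β+n+i−2)!). -/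
open MvPolynomial

lemma mac_altsum (f : Polynomial ℚ) (k : ℕ) (h : f.natDegree < k) :
    ∑ j ∈ Finset.range (k+1), (-1:ℚ)^j * (k.choose j) * f.eval (j:ℚ) = 0 := by
  have h1 := congrFun (Polynomial.fwdDiff_iter_eq_zero_of_degree_lt h) 0
  rw [fwdDiff_iter_eq_sum_shift] at h1
  simp only [zero_add, Pi.zero_apply] at h1
  have h2 := congrArg (fun z => (-1:ℚ)^k * z) h1
  simp only [mul_zero, Finset.mul_sum] at h2
  rw [← h2]
  refine Finset.sum_congr rfl fun j hj => ?_
  have hj' : j ≤ k := by simpa [Nat.lt_succ_iff] using hj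
  obtain ⟨d, rfl⟩ := Nat.exists_eq_add_of_le hj'
  have : ((-1:ℚ)^d)*(-1)^d = 1 := by rw [← mul_pow]; simp
  simp only [Nat.add_sub_cancel_left, zsmul_eq_mul, nsmul_eq_mul, mul_one]
  push_cast
  rw [pow_add]
  linear_combination (-((-1:ℚ)^j * ((j+d).choose j) * f.eval (j:ℚ))) * this

lemma mac_altrec (k : ℕ) : ∀ x : ℚ, 0 < x →
    ∑ j ∈ Finset.range (k+1), (-1:ℚ)^j * (k.choose j) * (x + j)⁻¹
      = k.factorial / ∏ j ∈ Finset.range (k+1), (x + j) := by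
  induction k with
  | zero => intro x hx; simp
  | succ k ih =>
    intro x hx
    have e : ∑ j ∈ Finset.range (k+1+1), (-1:ℚ)^j * ((k+1).choose j) * (x + j)⁻¹
        = ∑ j ∈ Finset.range (k+1), (-1:ℚ)^j * (k.choose j) * (x + j)⁻¹
        - ∑ j ∈ Finset.range (k+1), (-1:ℚ)^j * (k.choose j) * (x + 1 + j)⁻¹ := by
      have e1 : ∑ j ∈ Finset.range (k+1), (-1:ℚ)^j * (k.choose j) * (x + j)⁻¹ =
        ∑ j ∈ Finset.range (k+1+1), (-1:ℚ)^j * (k.choose j) * (x + j)⁻¹ := by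
        rw [Finset.sum_range_succ _ (k+1)]; simp
      rw [e1, Finset.sum_range_succ', Finset.sum_range_succ' _ (k+1), add_sub_right_comm,
        ← Finset.sum_sub_distrib]
      congr 1
      · refine Finset.sum_congr rfl fun j _ => ?_
        rw [Nat.choose_succ_succ]
        push_cast
        rw [show x + ((j:ℚ)+1) = x + 1 + j by ring]
        ring
      · simp
    have h0 : ∏ j ∈ Finset.range (k), (x + 1 + j) ≠ 0 :=
      Finset.prod_ne_zero_iff.2 fun j _ => by positivity
    rw [e, ih x hx, ih (x+1) (by linarith)]
    rw [Finset.prod_range_succ' _ (k+1), Finset.prod_range_succ' _ k, 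
      Finset.prod_range_succ _ k, Finset.prod_range_succ _ k]
    have e2 : ∀ m : ℕ, ∏ j ∈ Finset.range m, (x + ((j+1:ℕ):ℚ)) = ∏ j ∈ Finset.range (m), (x + 1 + j) :=
      fun m => Finset.prod_congr rfl fun j _ => by push_cast; ring
    rw [e2, Nat.factorial_succ]
    generalize ∏ j ∈ Finset.range (k), (x + 1 + (j:ℚ)) = W at *
    have : x + 1 + k ≠ 0 := by positivity
    push_cast
    rw [show x + ((k:ℚ)+1) = x + 1 + k by ring]
    have := hx.ne'
    simp only [add_zero]
    field_simp
    ring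

lemma mac_altdiv (f : Polynomial ℚ) (k : ℕ) (h : f.natDegree ≤ k) (hk : 0 < k) (x : ℚ) (hx : 0 < x) :
    ∑ j ∈ Finset.range (k+1), (-1:ℚ)^j * (k.choose j) * (f.eval (j:ℚ) * (x + j)⁻¹)
      = f.eval (-x) * (k.factorial / ∏ j ∈ Finset.range (k+1), (x + j)) := by
  have hf := Polynomial.modByMonic_add_div f (Polynomial.X - Polynomial.C (-x))
  rw [Polynomial.modByMonic_X_sub_C_eq_C_eval] at hf
  set g := f /ₘ (Polynomial.X - Polynomial.C (-x)) with hg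
  have hgd : g.natDegree < k := by
    rw [hg, Polynomial.natDegree_divByMonic _ (Polynomial.monic_X_sub_C _), Polynomial.natDegree_X_sub_C]
    omega
  have hz := mac_altsum g k hgd
  rw [← mac_altrec k x hx, Finset.mul_sum, ← add_zero (∑ i ∈ Finset.range (k+1), Polynomial.eval (-x) f * _), ← hz,
    ← Finset.sum_add_distrib]
  refine Finset.sum_congr rfl fun j _ => ?_
  have h3 := congrArg (Polynomial.eval (j:ℚ)) hf
  simp only [Polynomial.eval_add, Polynomial.eval_mul, Polynomial.eval_sub, Polynomial.eval_C,
    Polynomial.eval_X, sub_neg_eq_add] at h3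
  have : x + j ≠ 0 := by positivity
  rw [← h3]
  generalize Polynomial.eval (-x) f = u
  field_simp
  ring

/-- super Catalan -/
noncomputable def macS (A b : ℕ) : ℚ := (-1)^A * ((1 - Polynomial.X : Polynomial ℚ)^(2*A) * (1 + Polynomial.X)^(2*b)).coeff (A+b)

lemma macS_eq (A : ℕ) : ∀ b, macS A b = (2*A).factorial * (2*b).factorial / (A.factorial * b.factorial * (A+b).factorial) := by
  induction A with
  | zero =>
    intro b
    simp only [macS, pow_zero, mul_zero, one_mul, zero_add, Nat.factorial_zero, Nat.cast_one]
    rw [Polynomial.coeff_one_add_X_pow, Nat.cast_choose ℚ (by omega), show 2*b-b=b by omega]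
  | succ A ih =>
    intro b
    have e : macS (A+1) b = 4 * macS A b - macS A (b+1) := by
      unfold macS
      have e1 : (1 - Polynomial.X : Polynomial ℚ)^(2*(A+1)) * (1 + Polynomial.X)^(2*b)
         = (1 - Polynomial.X : Polynomial ℚ)^(2*A) * (1 + Polynomial.X)^(2*(b+1)) 
          - Polynomial.C 4 * (((1 - Polynomial.X : Polynomial ℚ)^(2*A) * (1 + Polynomial.X)^(2*b)) * Polynomial.X) := by
        rw [show (Polynomial.C 4 : Polynomial ℚ) = 4 from rfl]
        ring
      rw [e1, Polynomial.coeff_sub, Polynomial.coeff_C_mul, show A+1+b = A+b+1 by ring, Polynomial.coeff_mul_X]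
      rw [show A+(b+1) = A+b+1 by ring]
      ring
    rw [e, ih, ih]
    rw [show 2*(A+1) = 2*A+1+1 by ring, show 2*(b+1) = 2*b+1+1 by ring, show A+1+b = A+b+1 by ring, show A+(b+1) = A+b+1 by ring]
    simp only [Nat.factorial_succ]
    push_cast
    have := Nat.factorial_ne_zero A
    have := Nat.factorial_ne_zero b
    have := Nat.factorial_ne_zero (A+b)
    have : (A:ℚ)+1 ≠ 0 := by positivity
    have : (b:ℚ)+1 ≠ 0 := by positivity
    have : (A:ℚ)+b+1 ≠ 0 := by positivity
    field_simp
    ring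

lemma mac_coeff_prod (n N : ℕ) (f : Fin n → Polynomial ℚ) :
    MvPolynomial.coeff (Finsupp.equivFunOnFinite.symm fun _ : Fin n => N)
      (∏ i, Polynomial.aeval (X i : MvPolynomial (Fin n) ℚ) (f i)) = ∏ i, (f i).coeff N := by
  classical
  have h1 : ∀ i, Polynomial.aeval (X i : MvPolynomial (Fin n) ℚ) (f i) =
     ∑ k ∈ (f i).support, MvPolynomial.monomial (Finsupp.single i k) ((f i).coeff k) := by
    intro i
    rw [Polynomial.aeval_eq_sum_range, ← Polynomial.sum_over_range' (p := f i) (f := fun k a => a • (X i : MvPolynomial (Fin n) ℚ)^k) (by simp) _ (Nat.lt_succ_self _), Polynomial.sum]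
    refine Finset.sum_congr rfl fun k _ => ?_
    rw [MvPolynomial.X_pow_eq_monomial, MvPolynomial.smul_monomial, smul_eq_mul, mul_one]
  simp_rw [h1]
  rw [Finset.prod_univ_sum, MvPolynomial.coeff_sum]
  have h2 : ∀ x : Fin n → ℕ, MvPolynomial.coeff (Finsupp.equivFunOnFinite.symm fun _ : Fin n => N)
     (∏ i, MvPolynomial.monomial (Finsupp.single i (x i)) ((f i).coeff (x i))) = if x = fun _ => N then ∏ i, (f i).coeff N else 0 := by
    intro x
    have h3 : ∏ i, MvPolynomial.monomial (Finsupp.single i (x i)) ((f i).coeff (x i)) = MvPolynomial.monomial (Finsupp.equivFunOnFinite.symm x) (∏ i, (f i).coeff (x i)) := by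
      rw [← MvPolynomial.monomial_sum_prod]
      congr 1
      exact congrArg MvPolynomial.monomial (Finsupp.univ_sum_single (Finsupp.equivFunOnFinite.symm x))
    rw [h3, MvPolynomial.coeff_monomial]
    by_cases hx : x = fun _ => N
    · simp [hx]
    · simp [hx]
  simp_rw [h2]
  rw [Finset.sum_ite_eq']
  split_ifs with h
  · rfl
  · simp only [Fintype.mem_piFinset, Polynomial.mem_support_iff, not_forall, not_not] at h
    obtain ⟨i, hi⟩ := h
    exact (Finset.prod_eq_zero (Finset.mem_univ i) hi).symm

def macP (a k : ℕ) : ℚ := ∏ i ∈ Finset.range k, (4 * ((a:ℚ) + i) + 2)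

def macQ (x k : ℕ) : ℚ := ∏ i ∈ Finset.range k, ((x:ℚ) + i)

lemma macP_add (a k l : ℕ) : macP a (k+l) = macP a k * macP (a+k) l := by
  unfold macP
  rw [Finset.prod_range_add]
  congr 1
  exact Finset.prod_congr rfl fun i _ => by push_cast; ring

lemma macQ_add (a k l : ℕ) : macQ a (k+l) = macQ a k * macQ (a+k) l := by
  unfold macQ
  rw [Finset.prod_range_add]
  congr 1
  exact Finset.prod_congr rfl fun i _ => by push_cast; ring

lemma macP_ne (a k : ℕ) : macP a k ≠ 0 := 
  Finset.prod_ne_zero_iff.2 fun j _ => by positivity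

lemma macQ_ne (a k : ℕ) : macQ (a+1) k ≠ 0 := 
  Finset.prod_ne_zero_iff.2 fun j _ => by positivity

noncomputable def macF (a i : ℕ) : Polynomial ℚ :=
  ∏ l ∈ Finset.range i, (Polynomial.C 4 * Polynomial.X + Polynomial.C (4 * ((a:ℚ) + l) + 2))

noncomputable def macG (x d : ℕ) : Polynomial ℚ :=
  ∏ l ∈ Finset.range d, (Polynomial.X + Polynomial.C ((x:ℚ) + l))

lemma macF_deg (a i : ℕ) : (macF a i).natDegree ≤ i := by
  refine (Polynomial.natDegree_prod_le _ _).trans ?_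
  refine (Finset.sum_le_card_nsmul _ _ 1 fun l _ => ?_).trans (by simp)
  exact Polynomial.natDegree_linear_le

lemma macG_deg (a i : ℕ) : (macG a i).natDegree ≤ i := by
  refine (Polynomial.natDegree_prod_le _ _).trans ?_
  refine (Finset.sum_le_card_nsmul _ _ 1 fun l _ => ?_).trans (by simp)
  exact (Polynomial.natDegree_X_add_C _).le

lemma macF_eval (a i j : ℕ) : (macF a i).eval (j:ℚ) = macP (a+j) i := by
  unfold macF macP
  rw [Polynomial.eval_prod]
  exact Finset.prod_congr rfl fun l _ => by simp; ring

lemma macG_eval (a i j : ℕ) : (macG a i).eval (j:ℚ) = macQ (a+j) i := by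
  unfold macG macQ
  rw [Polynomial.eval_prod]
  exact Finset.prod_congr rfl fun l _ => by simp; ring

lemma macF_eval_neg (a b k : ℕ) : (macF a k).eval (-((a+b+k:ℕ):ℚ)) = (-1)^k * macP b k := by
  unfold macF macP
  rw [Polynomial.eval_prod, ← Finset.prod_range_reflect, ← Finset.card_range k, 
    ← Finset.prod_const, Finset.card_range, ← Finset.prod_mul_distrib]
  refine Finset.prod_congr rfl fun l hl => ?_
  have : l + 1 ≤ k := by simpa using hl
  obtain ⟨d, rfl⟩ := Nat.exists_eq_add_of_le this
  rw [show l + 1 + d - 1 - l = d by omega]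
  simp
  ring

lemma mac_orth (a s i k : ℕ) (h : i < k) :
    ∑ j ∈ Finset.range (k+1), (macP a (i+j) / macQ (s+1) (i+j)) *
      ((-1)^j * (k.choose j) * (macQ (s+k) j / macP a j)) = 0 := by
  obtain ⟨d, rfl⟩ := Nat.exists_eq_add_of_lt h
  have h0 := mac_altsum (macF a i * macG (s+1+i) d) (i+d+1)
    (lt_of_le_of_lt (Polynomial.natDegree_mul_le.trans (add_le_add (macF_deg _ _) (macG_deg _ _))) (by omega))
  rw [← mul_zero ((macQ (s+1) (i+d))⁻¹), ← h0, Finset.mul_sum]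
  refine Finset.sum_congr rfl fun j _ => ?_
  rw [Polynomial.eval_mul, macF_eval, macG_eval]
  have e1 : macP a (i+j) = macP a j * macP (a+j) i := by rw [add_comm, macP_add]
  have e2 : macQ (s+1) (i+d) * macQ (s+(i+d+1)) j = macQ (s+1) (i+j) * macQ (s+1+i+j) d := by
    rw [show s+(i+d+1) = s+1+(i+d) by ring, ← macQ_add, show s+1+i+j = s+1+(i+j) by ring, ← macQ_add]
    congr 1; ring
  have n1 := macP_ne a j
  have n2 := macQ_ne s (i+j)
  have n3 := macQ_ne s (i+d)
  rw [e1]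
  field_simp
  linear_combination (((i+d+1).choose j) : ℚ) * macP (a+j) i * e2

lemma mac_diag (a b k : ℕ) :
    ∑ j ∈ Finset.range (k+1), (macP a (k+j) / macQ (a+b+1) (k+j)) *
      ((-1)^j * (k.choose j) * (macQ (a+b+k) j / macP a j)) = 
      (-1)^k * macP b k * k.factorial / macQ (a+b+1) (2*k) := by
  rcases Nat.eq_zero_or_pos k with rfl | hk
  · simp [macP, macQ]
  have h0 := mac_altdiv (macF a k) k (macF_deg _ _) hk ((a+b+k:ℕ):ℚ) (by exact_mod_cast (by omega))
  rw [macF_eval_neg] at h0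
  obtain ⟨d, rfl⟩ := Nat.exists_eq_succ_of_ne_zero hk.ne'
  have e0 : macQ (a+b+1) (2*(d+1)) = macQ (a+b+1) d * ∏ j ∈ Finset.range (d+1+1), (((a+b+(d+1):ℕ):ℚ) + j) := by
    rw [show 2*(d+1) = d + (d+1+1) by ring, macQ_add, show a+b+1+d = a+b+(d+1) by ring]; rfl
  simp only [Nat.succ_eq_add_one] at *
  rw [e0]
  trans (macQ (a+b+1) d)⁻¹ * ((-1) ^ (d+1) * macP b (d+1) * (↑(d+1).factorial / ∏ j ∈ Finset.range (d+1+1), (((a+b+(d+1):ℕ):ℚ) + j)))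
  swap
  · simp only [div_eq_mul_inv, mul_inv]; ring
  rw [← h0, Finset.mul_sum]
  refine Finset.sum_congr rfl fun j _ => ?_
  rw [macF_eval]
  have e1 : macP a (d+1+j) = macP a j * macP (a+j) (d+1) := by rw [add_comm, macP_add]
  have e2 : macQ (a+b+1) (d+1+j) = macQ (a+b+1) d * macQ (a+b+(d+1)) j * (((a+b+(d+1):ℕ):ℚ) + j) := by
    rw [show a+b+(d+1) = a+b+1+d by ring, ← macQ_add, show d+1+j = d+j+1 by ring, macQ_add _ (d+j) 1]
    congr 1
    simp [macQ]; ring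
  have n1 := macP_ne a j
  have n2 := macQ_ne (a+b+d) j
  rw [show a+b+d+1 = a+b+(d+1) by ring] at n2
  have n3 := macQ_ne (a+b) d
  have n4 : (((a+b+(d+1):ℕ):ℚ) + j) ≠ 0 := by positivity
  rw [e1, e2]
  generalize (((a+b+(d+1):ℕ):ℚ) + j) = W at *
  field_simp

lemma mac_hankel (a b n : ℕ) :
    (Matrix.of fun i j : Fin n => macP a (i+j) / macQ (a+b+1) (i+j)).det =
      ∏ k ∈ Finset.range n, (k.factorial * macP b k * macP a k / (macQ (a+b+1) (2*k) * macQ (a+b+k) k)) := by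
  set M := (Matrix.of fun i j : Fin n => macP a (i+j) / macQ (a+b+1) (i+j)) with hM
  let U : Matrix (Fin n) (Fin n) ℚ := Matrix.of fun j k => 
    (-1)^(j:ℕ) * ((k:ℕ).choose j) * (macQ (a+b+k) j / macP a j)
  have hMU : ∀ i k : Fin n, (M * U) i k = ∑ j ∈ Finset.range (k+1), (macP a (i+j) / macQ (a+b+1) (i+j)) *
      ((-1)^j * ((k:ℕ).choose j) * (macQ (a+b+k) j / macP a j)) := by
    intro i k
    rw [Matrix.mul_apply]
    simp only [hM, U, Matrix.of_apply]
    rw [← Finset.sum_range (n := n) (fun j => (macP a (i+j) / macQ (a+b+1) (i+j)) *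
      ((-1)^j * ((k:ℕ).choose j) * (macQ (a+b+k) j / macP a j)))]
    symm
    apply Finset.sum_subset
    · intro x; simp; omega
    · intro x _ hx
      have : (k:ℕ) < x := by simpa using hx
      simp [Nat.choose_eq_zero_of_lt this]
  have hU : U.det = ∏ k : Fin n, U k k := Matrix.det_of_isUpperTriangular fun j k h => by
    have : (k:ℕ) < j := h
    simp [U, Nat.choose_eq_zero_of_lt this]
  have hL : (M*U).det = ∏ k : Fin n, (M*U) k k := Matrix.det_of_isLowerTriangular _ fun i k h => by
    have : (i:ℕ) < k := h
    rw [hMU, mac_orth _ _ _ _ this]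
  have hUk : ∀ k, U k k = (-1)^(k:ℕ) * (macQ (a+b+k) k / macP a k) := fun k => by simp [U]
  have hQ : ∀ k : ℕ, macQ (a+b+k) k ≠ 0 := by
    intro k
    rcases k with _ | k
    · simp [macQ]
    · exact macQ_ne (a+b+k) _
  have hU0 : U.det ≠ 0 := by
    rw [hU]
    refine Finset.prod_ne_zero_iff.2 fun k _ => ?_
    rw [hUk]
    exact mul_ne_zero (pow_ne_zero _ (by norm_num)) (div_ne_zero (hQ _) (macP_ne _ _))
  rw [Matrix.det_mul] at hL
  apply mul_right_cancel₀ hU0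
  rw [hL, hU, Finset.prod_range, ← Finset.prod_mul_distrib]
  refine Finset.prod_congr rfl fun k _ => ?_
  rw [hMU, mac_diag, hUk]
  have := hQ k
  have := macP_ne a k
  have := macQ_ne (a+b) (2*k)
  field_simp

lemma macS_shift (a b m : ℕ) : macS (a+m) b = macS a b * (macP a m / macQ (a+b+1) m) := by
  induction m with
  | zero => simp [macP, macQ]
  | succ m ih =>
    have : macS (a+(m+1)) b = macS (a+m) b * ((4*((a:ℚ)+m)+2) / ((a+b+1:ℕ)+(m:ℚ))) := by
      rw [macS_eq, macS_eq, ← add_assoc, show 2*(a+m+1) = 2*(a+m)+1+1 by ring, show a+m+1+b=a+m+b+1 by ring]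
      simp only [Nat.factorial_succ]
      have := Nat.factorial_ne_zero (a+m)
      have := Nat.factorial_ne_zero b
      have := Nat.factorial_ne_zero (a+m+b)
      have : (a:ℚ)+m+1 ≠ 0 := by positivity
      have : (a:ℚ)+b+1+m ≠ 0 := by positivity
      have : (a:ℚ)+m+b+1 ≠ 0 := by positivity
      push_cast
      field_simp
      ring
    rw [this, ih, show macP a (m+1) = macP a m * (4*((a:ℚ)+m)+2) from Finset.prod_range_succ _ _,
      show macQ (a+b+1) (m+1) = macQ (a+b+1) m * ((a+b+1:ℕ)+(m:ℚ)) from Finset.prod_range_succ _ _]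
    rw [mul_assoc, div_mul_div_comm]

lemma mac_entry (α β n : ℕ) (k l : Fin n) :
    (((1 - Polynomial.X) ^ (2 * α) * (1 - Polynomial.X ^ 2) ^ (2 * β)) *
      ((((1 - Polynomial.X)^2)^(k:ℕ) * Polynomial.X^(k.rev:ℕ)) * 
      (((1 - Polynomial.X)^2)^(l:ℕ) * Polynomial.X^(l.rev:ℕ))) : Polynomial ℚ).coeff (α + 2 * β + 2 * n - 2)
    = (-1)^(α+β) * macS (α+β) β * ((-1)^(k:ℕ) * ((-1)^(l:ℕ) * 
      (macP (α+β) (k+l) / macQ (α+β+β+1) (k+l)))) := by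
  have e : (((1 - Polynomial.X) ^ (2 * α) * (1 - Polynomial.X ^ 2) ^ (2 * β)) *
      ((((1 - Polynomial.X)^2)^(k:ℕ) * Polynomial.X^(k.rev:ℕ)) * 
      (((1 - Polynomial.X)^2)^(l:ℕ) * Polynomial.X^(l.rev:ℕ))) : Polynomial ℚ)
    = (1 - Polynomial.X) ^ (2 * (α+β+(k+l))) * (1+Polynomial.X)^(2*β) * Polynomial.X^((k.rev:ℕ)+l.rev) := by
    rw [show (1 - Polynomial.X^2 : Polynomial ℚ) = (1 - Polynomial.X) * (1+Polynomial.X) by ring, mul_pow, ← pow_mul, ← pow_mul]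
    ring
  have hN : α + 2 * β + 2 * n - 2 = (α+β+(k+l)+β) + ((k.rev:ℕ)+l.rev) := by
    simp only [Fin.val_rev]
    have := k.2
    have := l.2
    omega
  rw [e, hN, Polynomial.coeff_mul_X_pow]
  have h := macS_shift (α+β) β (k+l)
  have hs : ((-1:ℚ)^(α+β+((k:ℕ)+l))) * (-1)^(α+β+((k:ℕ)+l)) = 1 := by rw [← mul_pow]; simp
  rw [show (-1:ℚ)^(α+β) * macS (α+β) β * ((-1)^(k:ℕ) * ((-1)^(l:ℕ) * 
      (macP (α+β) (k+l) / macQ (α+β+β+1) (k+l)))) = (-1)^(α+β+((k:ℕ)+l)) * (macS (α+β) β * (macP (α+β) (k+l) / macQ (α+β+β+1) (k+l))) by ring, ← h]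
  unfold macS
  rw [← mul_assoc, hs, one_mul]

lemma mac_expand (α β n : ℕ) :
    MvPolynomial.coeff
      (Finsupp.equivFunOnFinite.symm fun _ : Fin n => α + 2 * β + 2 * n - 2)
      ((∏ i : Fin n, ((1 - X i) ^ (2 * α) * (1 - X i ^ 2) ^ (2 * β))) *
        ∏ i : Fin n, ∏ j ∈ Finset.Ioi i,
          ((X i - X j) ^ 2 * (1 - X i * X j) ^ 2) : MvPolynomial (Fin n) ℚ) =
    n.factorial * (Matrix.of fun k l : Fin n => (-1)^(α+β) * macS (α+β) β * ((-1)^(k:ℕ) * ((-1)^(l:ℕ) * 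
      (macP (α+β) (k+l) / macQ (α+β+β+1) (k+l))))).det := by
  set H := Matrix.of fun k l : Fin n => (-1)^(α+β) * macS (α+β) β * ((-1)^(k:ℕ) * ((-1)^(l:ℕ) * 
      (macP (α+β) (k+l) / macQ (α+β+β+1) (k+l)))) with hH
  let V : Matrix (Fin n) (Fin n) (MvPolynomial (Fin n) ℚ) :=
    Matrix.projVandermonde (fun i => (1 - X i)^2) (fun i => X i)
  have h1 : (∏ i : Fin n, ∏ j ∈ Finset.Ioi i,
          ((X i - X j) ^ 2 * (1 - X i * X j) ^ 2) : MvPolynomial (Fin n) ℚ) = V.det * V.det := by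
    rw [Matrix.det_projVandermonde]
    simp only [← Finset.prod_mul_distrib]
    refine Finset.prod_congr rfl fun i _ => Finset.prod_congr rfl fun j _ => ?_
    ring
  have h2 : V.det = ∑ σ : Equiv.Perm (Fin n), C (((Equiv.Perm.sign σ : ℤˣ) : ℤ) : ℚ) * ∏ i, V i (σ i) := by
    rw [← Matrix.det_transpose, Matrix.det_apply']
    refine Finset.sum_congr rfl fun σ _ => ?_
    simp
  rw [h1, h2, Finset.sum_mul_sum, Finset.mul_sum, MvPolynomial.coeff_sum]
  have h3 : ∀ σ : Equiv.Perm (Fin n), ∑ τ : Equiv.Perm (Fin n), (((Equiv.Perm.sign σ : ℤˣ) : ℤ) : ℚ) * ((((Equiv.Perm.sign τ : ℤˣ) : ℤ) : ℚ) * ∏ i, H (σ i) (τ i)) = H.det := by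
    intro σ
    rw [← Finset.mul_sum]
    have := Matrix.det_permute σ H
    rw [← Matrix.det_transpose, Matrix.det_apply'] at this
    simp only [Matrix.transpose_apply, Matrix.submatrix_apply, id] at this
    rw [this, ← mul_assoc, ← Int.cast_mul, ← Units.val_mul, Int.units_mul_self]
    simp
  trans ∑ σ : Equiv.Perm (Fin n), H.det
  swap
  · simp [Fintype.card_perm]
  refine Finset.sum_congr rfl fun σ _ => ?_
  rw [← h3 σ, Finset.mul_sum, MvPolynomial.coeff_sum]
  refine Finset.sum_congr rfl fun τ _ => ?_
  have h4 := mac_coeff_prod n (α + 2 * β + 2 * n - 2) (fun i => ((1 - Polynomial.X) ^ (2 * α) * (1 - Polynomial.X ^ 2) ^ (2 * β)) *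
      ((((1 - Polynomial.X)^2)^(σ i:ℕ) * Polynomial.X^((σ i).rev:ℕ)) * 
      (((1 - Polynomial.X)^2)^(τ i:ℕ) * Polynomial.X^((τ i).rev:ℕ))))
  simp only [mac_entry] at h4
  have h5 : ∏ i, H (σ i) (τ i) = ∏ i : Fin n, ((-1)^(α+β) * macS (α+β) β * ((-1)^(σ i:ℕ) * ((-1)^(τ i:ℕ) * 
      (macP (α+β) (σ i+τ i) / macQ (α+β+β+1) (σ i+τ i))))) := rfl
  rw [h5, ← h4, ← MvPolynomial.coeff_C_mul, ← MvPolynomial.coeff_C_mul]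
  congr 1
  simp only [map_mul, map_pow, map_sub, map_one, Polynomial.aeval_X, Finset.prod_mul_distrib, V, Matrix.projVandermonde_apply]
  ring

lemma mac_final (s n : ℕ) : ∏ k ∈ Finset.range n, ((s.factorial : ℚ) * (macQ (s+1) (2*k) * macQ (s+k) k))
    = ∏ k ∈ Finset.range n, ((s+n+k-1).factorial : ℚ) := by
  have hq : ∀ k x : ℕ, (x.factorial : ℚ) * macQ (x+1) k = (x+k).factorial := by
    intro k x
    induction k with
    | zero => simp [macQ]
    | succ k ih =>
      rw [show macQ (x+1) (k+1) = macQ (x+1) k * ((x+1:ℕ)+(k:ℚ)) from Finset.prod_range_succ _ _, ← mul_assoc, ih, ← add_assoc, Nat.factorial_succ]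
      push_cast; ring
  induction n with
  | zero => simp
  | succ n ih =>
    rw [Finset.prod_range_succ, ih]
    rcases n with _ | n
    · simp [macQ]
    rw [Finset.prod_range_succ', Finset.prod_range_succ, Finset.prod_range_succ]
    have h1 := hq (2*(n+1)) s
    have h2 := hq (n+1) (s+n)
    have h3 : ∏ k ∈ Finset.range n, ((s+(n+1)+(k+1)-1).factorial : ℚ) = ∏ k ∈ Finset.range n, ((s+(n+1+1)+k-1).factorial : ℚ) :=
      Finset.prod_congr rfl fun k _ => by congr 2; omega
    rw [h3, ← mul_assoc (s.factorial : ℚ), h1]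
    rw [show s+(n+1+1)+n-1 = s+n+(n+1) by omega, show s+(n+1+1)+(n+1)-1 = s+2*(n+1) by omega, ← h2]
    rw [show s+(n+1)+0-1 = s+n by omega, show s+(n+1) = s+n+1 by ring]
    ring

lemma macP_fact (a k : ℕ) : ((2*a).factorial : ℚ) / a.factorial * macP a k = (2*a+2*k).factorial / (a+k).factorial := by
  induction k with
  | zero => simp [macP]
  | succ k ih =>
    rw [show macP a (k+1) = macP a k * (4*((a:ℚ)+k)+2) from Finset.prod_range_succ _ _, ← mul_assoc, ih,
      show 2*a+2*(k+1) = 2*a+2*k+1+1 by ring, ← add_assoc]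
    simp only [Nat.factorial_succ]
    have := Nat.factorial_ne_zero (a+k)
    have : (a:ℚ)+k+1 ≠ 0 := by positivity
    push_cast
    field_simp
    ring

theorem macdonald_BCn_special (α β n : ℕ) :
    MvPolynomial.coeff
      (Finsupp.equivFunOnFinite.symm fun _ : Fin n => α + 2 * β + 2 * n - 2)
      ((∏ i : Fin n, ((1 - X i) ^ (2 * α) * (1 - X i ^ 2) ^ (2 * β))) *
        ∏ i : Fin n, ∏ j ∈ Finset.Ioi i,
          ((X i - X j) ^ 2 * (1 - X i * X j) ^ 2) : MvPolynomial (Fin n) ℚ) =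
    (-1 : ℚ) ^ (n * (α + β)) *
      ∏ i ∈ Finset.Icc 1 n,
        (((2 * β + 2 * i - 2).factorial * (2 * α + 2 * β + 2 * i - 2).factorial *
          i.factorial : ℚ)) /
        (((β + i - 1).factorial * (α + β + i - 1).factorial *
          (α + 2 * β + n + i - 2).factorial : ℚ)) := by
  rw [mac_expand]
  have hd : (Matrix.of fun k l : Fin n => (-1)^(α+β) * macS (α+β) β * ((-1)^(k:ℕ) * ((-1)^(l:ℕ) * 
      (macP (α+β) (k+l) / macQ (α+β+β+1) (k+l))))).det = ((-1)^(α+β) * macS (α+β) β)^n * 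
      (Matrix.of fun i j : Fin n => macP (α+β) (i+j) / macQ (α+β+β+1) (i+j)).det := by
    have h1 := Matrix.det_mul_column (fun k : Fin n => (-1)^(α+β) * macS (α+β) β * (-1)^(k:ℕ))
      (Matrix.of fun k l : Fin n => (-1)^(l:ℕ) * (macP (α+β) (k+l) / macQ (α+β+β+1) (k+l)))
    have h2 := Matrix.det_mul_row (fun k : Fin n => (-1)^(k:ℕ))
      (Matrix.of fun k l : Fin n => (macP (α+β) (k+l) / macQ (α+β+β+1) (k+l)))
    simp only [Matrix.of_apply] at h1 h2
    rw [h2, Finset.prod_mul_distrib] at h1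
    simp only [← mul_assoc] at h1 ⊢
    rw [h1, Finset.prod_const, Finset.card_univ, Fintype.card_fin]
    rw [mul_assoc (((-1) ^ (α + β) * macS (α + β) β) ^ n), ← Finset.prod_mul_distrib]
    rw [Finset.prod_eq_one, mul_one]
    intro i _
    rw [← mul_pow]; simp
  rw [hd, mac_hankel]
  rw [mul_pow, ← pow_mul, mul_comm (α+β) n]
  have hf : (n.factorial : ℚ) * ∏ k ∈ Finset.range n, (k.factorial : ℚ) = ∏ k ∈ Finset.range n, ((k+1).factorial : ℚ) := by
    have := Finset.prod_range_succ (fun k => (k.factorial : ℚ)) n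
    rw [Finset.prod_range_succ'] at this
    simp at this
    rw [this]; ring
  have hIcc : Finset.Icc 1 n = Finset.Ico 1 (n+1) := rfl
  rw [hIcc, Finset.prod_Ico_eq_prod_range]
  simp only [Nat.add_sub_cancel]
  trans (-1) ^ (n * (α + β)) * ((n.factorial : ℚ) * ∏ k ∈ Finset.range n, (k.factorial : ℚ)) * 
     (∏ k ∈ Finset.range n, (((2*β+2*k).factorial : ℚ) / (β+k).factorial * ((2*(α+β)+2*k).factorial / (α+β+k).factorial))) / 
     (∏ k ∈ Finset.range n, (((α+β+β).factorial : ℚ) * (macQ (α+β+β+1) (2*k) * macQ (α+β+β+k) k)))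
  · have e : macS (α+β) β ^ n = ∏ k ∈ Finset.range n, macS (α+β) β := by simp
    have key : (∏ k ∈ Finset.range n, macS (α+β) β) * (∏ k ∈ Finset.range n,
          (k.factorial * macP β k * macP (α + β) k / (macQ (α + β + β + 1) (2 * k) * macQ (α + β + β + k) k))) =
        (∏ k ∈ Finset.range n, (k.factorial : ℚ)) *
     (∏ k ∈ Finset.range n, (((2*β+2*k).factorial : ℚ) / (β+k).factorial * ((2*(α+β)+2*k).factorial / (α+β+k).factorial))) /
     (∏ k ∈ Finset.range n, (((α+β+β).factorial : ℚ) * (macQ (α+β+β+1) (2*k) * macQ (α+β+β+k) k))) := by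
      rw [← Finset.prod_mul_distrib, ← Finset.prod_mul_distrib, ← Finset.prod_div_distrib]
      refine Finset.prod_congr rfl fun k _ => ?_
      rw [← macP_fact, ← macP_fact, macS_eq]
      simp only [div_eq_mul_inv, mul_inv]
      ring
    rw [e, mul_assoc, key]
    simp only [div_eq_mul_inv]
    ring
  · rw [hf, mac_final, mul_assoc, mul_div_assoc, ← Finset.prod_mul_distrib, ← Finset.prod_div_distrib]
    congr 1
    refine Finset.prod_congr rfl fun k _ => ?_
    rw [show 2*β+2*(1+k)-2 = 2*β+2*k by omega, show 2*α+2*β+2*(1+k)-2 = 2*(α+β)+2*k by omega,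
      show β+(1+k)-1 = β+k by omega, show α+β+(1+k)-1 = α+β+k by omega,
      show α+2*β+n+(1+k)-2 = α+β+β+n+k-1 by omega, add_comm 1 k]
    simp only [div_eq_mul_inv, mul_inv]
    ring
end
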